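/- arXiv:1202.0085 — 5 statements merged into one kernel-verified Lean document; each statement's English description precedes it below -/
import Mathlib

section
/- Let K be a field and X* = A_1 × ... × A_n ⊂ K^n with d_i = |A_i|. The dimension of the cartesian code C_{X*}(d) over K equals Σ_{T ⊆ {1,...,n}} (−1)^{|T|} · C(n + d − Σ_{i∈T} d_i, d − Σ_{i∈T} d_i), where C(a,b) denotes the binomial coefficient (taken to be 0 when b < 0). -/
/-!
Dividing by the polynomials `∏ a ∈ A i, (X i - C a)` in a degree-compatible monomial order replaces
any polynomial by one of no larger total degree that takes the same values on the grid `∏ A i` and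
has degree `< #(A i)` in each variable `X i`. Such a reduced polynomial is determined by its values
on the grid, so the reduced monomials of degree at most `d` give a basis of the code. Removing the
condition `m i < #(A i)` by inclusion-exclusion leaves translates of the simplices
`{m | m.degree ≤ e}`, which have `(n + e).choose e` points.
-/

open Finset MvPolynomial

section Counting

theorem card_filter_forall_not_eq_sum {ι α : Type*} [Fintype ι] (s : Finset α) (p : ι → α → Prop)
    [∀ i, DecidablePred (p i)] :
    (#{x ∈ s | ∀ i, ¬ p i x} : ℤ) =
      ∑ T : Finset ι, (-1 : ℤ) ^ #T * (#{x ∈ s | ∀ i ∈ T, p i x} : ℤ) := by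
  classical
  have card_attach (q : α → Prop) [DecidablePred q] :
      #{x : s | q x} = #{x ∈ s | q x} := by
    rw [← card_map (Function.Embedding.subtype (· ∈ s))]
    congr 1
    ext x
    simp [and_comm]
  have h := inclusion_exclusion_card_inf_compl univ fun i ↦ ({x | p i x} : Finset s)
  rw [powerset_univ] at h
  convert h using 3 with T
  · rw [← card_attach]
    congr 1
    ext x
    simp [mem_inf]
  · rw [← card_attach]
    congr 2
    ext x
    simp [mem_inf]

section Finite

variable {σ : Type*} [Finite σ]

/-- The exponents of the monomials of total degree at most `e` in the variables `σ`. -/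
noncomputable def exponentsDegreeLE (σ : Type*) [Finite σ] (e : ℕ) : Finset (σ →₀ ℕ) :=
  (Finsupp.finite_of_degree_le e).toFinset

theorem mem_exponentsDegreeLE {e : ℕ} {m : σ →₀ ℕ} :
    m ∈ exponentsDegreeLE σ e ↔ m.degree ≤ e := by
  simp [exponentsDegreeLE]

theorem filter_le_exponentsDegreeLE [DecidableLE (σ →₀ ℕ)] {b : σ →₀ ℕ} {d : ℕ}
    (hb : b.degree ≤ d) :
    {m ∈ exponentsDegreeLE σ d | b ≤ m} =
      (exponentsDegreeLE σ (d - b.degree)).map (addRightEmbedding b) := by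
  ext m
  simp only [mem_filter, mem_map, mem_exponentsDegreeLE, addRightEmbedding_apply,
    Nat.le_sub_iff_add_le hb, ← map_add]
  constructor
  · rintro ⟨hm, hbm⟩
    exact ⟨m - b, by rwa [tsub_add_cancel_of_le hbm], tsub_add_cancel_of_le hbm⟩
  · rintro ⟨c, hc, rfl⟩
    exact ⟨hc, le_add_self⟩

end Finite

variable {σ : Type*} [Fintype σ]

theorem card_exponentsDegreeLE (e : ℕ) :
    #(exponentsDegreeLE σ e) = (Fintype.card σ + e).choose e := by
  classical
  have maps_degree : ∀ m ∈ exponentsDegreeLE σ e, m.degree ∈ range (e + 1) := fun m hm ↦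
    mem_range_succ_iff.2 (mem_exponentsDegreeLE.1 hm)
  have fiber_eq : ∀ k ∈ range (e + 1),
      {m ∈ exponentsDegreeLE σ e | m.degree = k} = finsuppAntidiag univ k := by
    intro k hk
    ext m
    simp only [mem_filter, mem_exponentsDegreeLE, mem_finsuppAntidiag, Finsupp.degree_eq_sum,
      subset_univ, and_true, and_iff_right_iff_imp]
    exact fun hm ↦ hm ▸ mem_range_succ_iff.1 hk
  calc #(exponentsDegreeLE σ e)
      = ∑ k ∈ range (e + 1), #{m ∈ exponentsDegreeLE σ e | m.degree = k} :=
        card_eq_sum_card_fiberwise maps_degree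
    _ = ∑ k ∈ range (e + 1), (Fintype.card σ).multichoose k :=
        sum_congr rfl fun k hk ↦ by
          rw [fiber_eq k hk, card_finsuppAntidiag_nat_eq_multichoose, card_univ]
    _ = (Fintype.card σ + e).choose e := by
        rw [Nat.sum_range_multichoose, ← Nat.choose_symm_add, add_comm]

theorem card_filter_le_exponentsDegreeLE [DecidableLE (σ →₀ ℕ)] (b : σ →₀ ℕ) (d : ℕ) :
    #{m ∈ exponentsDegreeLE σ d | b ≤ m} =
      if b.degree ≤ d then (Fintype.card σ + d - b.degree).choose (d - b.degree) else 0 := by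
  split_ifs with hb
  · rw [filter_le_exponentsDegreeLE hb, card_map, card_exponentsDegreeLE, Nat.add_sub_assoc hb]
  · rw [card_eq_zero, filter_eq_empty_iff]
    exact fun m hm hbm ↦ hb ((Finsupp.degree_mono hbm).trans (mem_exponentsDegreeLE.1 hm))

theorem card_filter_forall_mem_le_exponentsDegreeLE (a : σ → ℕ) (d : ℕ) (T : Finset σ) :
    #{m ∈ exponentsDegreeLE σ d | ∀ i ∈ T, a i ≤ m i} =
      if ∑ i ∈ T, a i ≤ d then
        (Fintype.card σ + d - ∑ i ∈ T, a i).choose (d - ∑ i ∈ T, a i) else 0 := by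
  classical
  let b : σ →₀ ℕ := Finsupp.indicator T fun i _ ↦ a i
  have degree_b : b.degree = ∑ i ∈ T, a i := by
    simp [b, Finsupp.degree_eq_sum, Finsupp.indicator_apply]
  have b_le_iff (m : σ →₀ ℕ) : b ≤ m ↔ ∀ i ∈ T, a i ≤ m i := by
    refine forall_congr' fun i ↦ ?_
    by_cases hi : i ∈ T <;> simp [b, Finsupp.indicator_apply, hi]
  simp only [← b_le_iff, ← degree_b, card_filter_le_exponentsDegreeLE]

/-- The exponents of the monomials of total degree at most `d` whose degree in each variable `X i`
is less than `a i`. -/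
noncomputable def reducedExponents (a : σ → ℕ) (d : ℕ) : Finset (σ →₀ ℕ) :=
  {m ∈ exponentsDegreeLE σ d | ∀ i, m i < a i}

theorem card_reducedExponents (a : σ → ℕ) (d : ℕ) :
    (#(reducedExponents a d) : ℤ) =
      ∑ T : Finset σ,
        if ∑ i ∈ T, a i ≤ d then
          (-1 : ℤ) ^ #T *
            ((Fintype.card σ + d - ∑ i ∈ T, a i).choose (d - ∑ i ∈ T, a i) : ℤ)
        else 0 := by
  have h := card_filter_forall_not_eq_sum (exponentsDegreeLE σ d) fun i m ↦ a i ≤ m i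
  simp only [not_le, card_filter_forall_mem_le_exponentsDegreeLE] at h
  simpa only [reducedExponents, Nat.cast_ite, Nat.cast_zero, mul_ite, mul_zero] using h

end Counting

section Reduction

variable {σ R : Type*} [CommRing R]

/-- The polynomial in the single variable `X i` with simple roots at the elements of `S`. -/
noncomputable def vanishingPoly (S : Finset R) (i : σ) : MvPolynomial σ R :=
  ∏ a ∈ S, (X i - C a)

theorem eval_vanishingPoly {S : Finset R} {i : σ} {x : σ → R} (hx : x i ∈ S) :
    eval x (vanishingPoly S i) = 0 := by
  rw [vanishingPoly, map_prod]
  exact prod_eq_zero hx (by simp)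

theorem monic_vanishingPoly (ord : MonomialOrder σ) (S : Finset R) (i : σ) :
    ord.Monic (vanishingPoly S i) :=
  MonomialOrder.Monic.prod fun a _ ↦ ord.monic_X_sub_C i a

theorem degree_vanishingPoly [Nontrivial R] (ord : MonomialOrder σ) (S : Finset R) (i : σ) :
    ord.degree (vanishingPoly S i) = Finsupp.single i #S := by
  have regular : ∀ a ∈ S, IsRegular (ord.leadingCoeff (X i - C a)) := fun a _ ↦ by
    rw [ord.monic_X_sub_C]
    exact isRegular_one
  rw [vanishingPoly, MonomialOrder.degree_prod_of_regular regular]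
  simp [ord.degree_X_sub_C]

theorem exists_reduced_eval_eq [Finite σ] [Nontrivial R] (A : σ → Finset R)
    (f : MvPolynomial σ R) :
    ∃ r : MvPolynomial σ R, r.totalDegree ≤ f.totalDegree ∧
      (∀ m ∈ r.support, ∀ i, m i < #(A i)) ∧
      ∀ x : σ → R, (∀ i, x i ∈ A i) → eval x r = eval x f := by
  let : LinearOrder σ := WellOrderingRel.isWellOrder.linearOrder
  let ord := MonomialOrder.degLex (σ := σ)
  let P (i : σ) : MvPolynomial σ R := vanishingPoly (A i) i
  obtain ⟨h, r, hf, degree_mul_le, r_reduced⟩ := ord.div (b := P)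
    (fun i ↦ by rw [(monic_vanishingPoly ord (A i) i).leadingCoeff_eq_one]; exact isUnit_one) f
  have hr : r = f - ∑ i ∈ h.support, P i * h i := by
    simp [hf, Finsupp.linearCombination_apply, Finsupp.sum, mul_comm]
  refine ⟨r, ?_, fun m hm i ↦ ?_, fun x hx ↦ ?_⟩
  · rw [hr]
    exact (totalDegree_sub _ _).trans (max_le le_rfl (totalDegree_finsetSum_le fun i _ ↦
      degLex_totalDegree_monotone (degree_mul_le i)))
  · simpa [P, degree_vanishingPoly] using r_reduced m hm i
  · rw [hr, map_sub, map_sum, sub_eq_self]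
    exact sum_eq_zero fun i _ ↦ by rw [map_mul, eval_vanishingPoly (hx i), zero_mul]

end Reduction

section EvaluationCode

variable {σ R : Type*} [CommSemiring R]

/-- Evaluation of polynomials at the points of `Y`, as a linear map. -/
noncomputable def evalOn (Y : Finset (σ → R)) : MvPolynomial σ R →ₗ[R] (Y → R) :=
  LinearMap.funLeft R R Subtype.val ∘ₗ evalₗ R σ

@[simp]
theorem evalOn_apply (Y : Finset (σ → R)) (f : MvPolynomial σ R) (x : Y) :
    evalOn Y f x = eval (x : σ → R) f := rfl

/-- The evaluation code of order `d` on `Y`: the values on `Y` of the polynomials of total degree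
at most `d`. The cartesian code is the case `Y = Fintype.piFinset A`. -/
noncomputable def evaluationCode (Y : Finset (σ → R)) (d : ℕ) : Submodule R (Y → R) :=
  (restrictTotalDegree σ R d).map (evalOn Y)

theorem span_eval_eq_evaluationCode (Y : Finset (σ → R)) (d : ℕ) :
    Submodule.span R {v : Y → R | ∃ f : MvPolynomial σ R, f.totalDegree ≤ d ∧
      ∀ x : Y, v x = eval (x : σ → R) f} = evaluationCode Y d := by
  convert Submodule.span_eq (evaluationCode Y d) using 2
  ext v
  simp [evaluationCode, mem_restrictTotalDegree, funext_iff, eq_comm]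

theorem mem_restrictSupport_reducedExponents [Fintype σ] {a : σ → ℕ} {d : ℕ}
    {f : MvPolynomial σ R} :
    f ∈ restrictSupport R (reducedExponents a d : Set (σ →₀ ℕ)) ↔
      f.totalDegree ≤ d ∧ ∀ m ∈ f.support, ∀ i, m i < a i := by
  simp only [mem_restrictSupport_iff, Set.subset_def, mem_coe, reducedExponents, mem_filter,
    mem_exponentsDegreeLE, forall₂_and, totalDegree, Finset.sup_le_iff]
  rfl

end EvaluationCode

section CartesianCode

variable {σ R : Type*} [Fintype σ] [DecidableEq σ] [CommRing R]

theorem evaluationCode_piFinset [Nontrivial R] (A : σ → Finset R) (d : ℕ) :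
    evaluationCode (Fintype.piFinset A) d =
      (restrictSupport R (reducedExponents (fun i ↦ #(A i)) d : Set (σ →₀ ℕ))).map
        (evalOn (Fintype.piFinset A)) := by
  apply le_antisymm
  · rintro _ ⟨f, hf, rfl⟩
    obtain ⟨r, degree_le, r_reduced, eval_eq⟩ := exists_reduced_eval_eq A f
    have hfd : f.totalDegree ≤ d := (mem_restrictTotalDegree _ _ _).1 hf
    refine ⟨r, mem_restrictSupport_reducedExponents.2 ⟨degree_le.trans hfd, r_reduced⟩, ?_⟩
    ext x
    exact eval_eq x (Fintype.mem_piFinset.1 x.2)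
  · exact Submodule.map_mono fun f hf ↦
      (mem_restrictTotalDegree _ _ _).2 (mem_restrictSupport_reducedExponents.1 hf).1

variable [IsDomain R]

theorem eq_zero_of_reduced_of_evalOn_eq_zero {A : σ → Finset R} {f : MvPolynomial σ R}
    (f_reduced : ∀ m ∈ f.support, ∀ i, m i < #(A i))
    (hf : evalOn (Fintype.piFinset A) f = 0) : f = 0 := by
  by_contra f_ne_zero
  obtain ⟨m, hm⟩ := support_nonempty.2 f_ne_zero
  refine f_ne_zero (eq_zero_of_eval_zero_at_prod_finset f A (fun i ↦ ?_) fun x hx ↦ ?_)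
  · exact (degreeOf_lt_iff (Nat.zero_lt_of_lt (f_reduced m hm i))).2 fun c hc ↦ f_reduced c hc i
  · exact congrFun hf ⟨x, Fintype.mem_piFinset.2 hx⟩

theorem finrank_evaluationCode_piFinset (A : σ → Finset R) (d : ℕ) :
    Module.finrank R (evaluationCode (Fintype.piFinset A) d) =
      #(reducedExponents (fun i ↦ #(A i)) d) := by
  let V := restrictSupport R (reducedExponents (fun i ↦ #(A i)) d : Set (σ →₀ ℕ))
  have evalOn_injOn : Function.Injective ((evalOn (Fintype.piFinset A)).domRestrict V) := by
    rw [injective_iff_map_eq_zero]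
    exact fun f hf ↦ Subtype.ext (eq_zero_of_reduced_of_evalOn_eq_zero
      (mem_restrictSupport_reducedExponents.1 f.2).2 hf)
  rw [evaluationCode_piFinset, ← LinearMap.range_domRestrict,
    LinearMap.finrank_range_of_inj evalOn_injOn,
    Module.finrank_eq_nat_card_basis (basisRestrictSupport R _)]
  simp

end CartesianCode

theorem stmt_11_general {σ R : Type*} [Fintype σ] [DecidableEq σ] [CommRing R] [IsDomain R]
    (A : σ → Finset R) (d : ℕ) :
    (Module.finrank R
        (Submodule.span R
          {v : ↥(Fintype.piFinset A) → R |
            ∃ f : MvPolynomial σ R, f.totalDegree ≤ d ∧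
              ∀ x : ↥(Fintype.piFinset A), v x = eval (x : σ → R) f}) : ℤ) =
      ∑ T : Finset σ,
        if ∑ i ∈ T, #(A i) ≤ d then
          (-1 : ℤ) ^ #T *
            ((Fintype.card σ + d - ∑ i ∈ T, #(A i)).choose (d - ∑ i ∈ T, #(A i)) : ℤ)
        else 0 := by
  rw [span_eval_eq_evaluationCode, finrank_evaluationCode_piFinset, card_reducedExponents]

theorem stmt_11 {K : Type*} [Field K] [DecidableEq K] (n : ℕ) (A : Fin n → Finset K)
    (hA : ∀ i, (A i).Nonempty) (d : ℕ) :
    (Module.finrank K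
        (Submodule.span K
          {v : ↥(Fintype.piFinset A) → K |
            ∃ f : MvPolynomial (Fin n) K, f.totalDegree ≤ d ∧
              ∀ x : ↥(Fintype.piFinset A),
                v x = MvPolynomial.eval (x : Fin n → K) f}) : ℤ) =
      ∑ T : Finset (Fin n),
        if (∑ i ∈ T, (A i).card) ≤ d then
          (-1 : ℤ) ^ T.card *
            ((n + d - ∑ i ∈ T, (A i).card).choose (d - ∑ i ∈ T, (A i).card) : ℤ)
        else 0 := by
  simpa only [Fintype.card_fin] using stmt_11_general A d
end

section
/- Let K be a field, A_1,...,A_n finite nonempty subsets of K, and Y = {[(γ_1,...,γ_n,1)] : γ_i ∈ A_i} ⊂ P^n the projective closure of X* = A_1 × ... × A_n. Then the vanishing ideal I(Y) ⊂ K[t_1,...,t_n,u] equals the ideal generated by the homogeneous polynomials ∏_{γ ∈ A_i}(t_i − u γ) for i = 1,...,n; in particular I(Y) is a complete intersection of height n. -/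
/-!
A form `f` of degree `m` satisfies `f(γ₁u, …, γₙu, u) = u ^ m f(γ, 1)`. Hence, read as a polynomial
in `t` over `R[u]`, a form vanishing on the projective closure of `A₁ × ⋯ × Aₙ` vanishes on the
affine grid `uA₁ × ⋯ × uAₙ`, and Alon's combinatorial Nullstellensatz over the domain `R[u]` writes
it in terms of the `∏_{γ ∈ Aᵢ} (tᵢ - γu)`. A prime containing these products contains the ideal of
some point of that grid over `R[u]`, and the ideal of a point of affine `n`-space over a domain has
height `n`: the chain obtained by specializing one variable at a time bounds it below, and Krull's
height theorem over the fraction field bounds it above.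
-/

open MvPolynomial

section Height

variable {R : Type*} [CommRing R]

lemma sInf_orderHeight_eq_height (I : Ideal R) :
    sInf {h : ℕ∞ | ∃ p : PrimeSpectrum R, I ≤ p.asIdeal ∧ h = Order.height p} = I.height := by
  apply le_antisymm
  · rw [I.height_eq_inf_minimalPrimes]
    refine le_iInf₂ fun J hJ ↦ sInf_le ⟨⟨J, hJ.isPrime⟩, hJ.1.2, ?_⟩
    exact PrimeSpectrum.height_eq_orderHeight ⟨J, hJ.isPrime⟩
  · refine le_sInf ?_
    rintro _ ⟨p, hp, rfl⟩
    exact (Ideal.height_mono hp).trans_eq p.height_eq_orderHeight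

lemma height_span_range_le_natCard [IsNoetherianRing R] {ι : Type*} [Finite ι] (f : ι → R)
    (hf : Ideal.span (Set.range f) ≠ ⊤) :
    (Ideal.span (Set.range f)).height ≤ Nat.card ι := by
  obtain ⟨p, hp⟩ := Ideal.nonempty_minimalPrimes hf
  calc (Ideal.span (Set.range f)).height
      ≤ p.height := Ideal.height_mono hp.1.2
    _ ≤ (Set.range f).ncard :=
        Ideal.height_le_card_of_mem_minimalPrimes_span (Set.finite_range f) hp
    _ ≤ Nat.card ι := by
        rw [← Set.image_univ, ← Set.ncard_univ]
        exact_mod_cast Set.ncard_image_le Set.finite_univ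

end Height

section PointIdeal

variable {σ R : Type*} [CommRing R]

open scoped Classical in
/-- The specialization `Xᵢ ↦ xᵢ` of the variables `Xᵢ` with `i ∈ s`; the other variables are kept.
Its kernel is the ideal of the coordinate subspace `Xᵢ = xᵢ` (`i ∈ s`). -/
noncomputable def specialize (x : σ → R) (s : Set σ) : MvPolynomial σ R →ₐ[R] MvPolynomial σ R :=
  aeval (s.piecewise (fun i ↦ C (x i)) X)

lemma specialize_X_of_mem (x : σ → R) {s : Set σ} {i : σ} (hi : i ∈ s) :
    specialize x s (X i) = C (x i) := by
  simp [specialize, hi]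

lemma specialize_X_of_notMem (x : σ → R) {s : Set σ} {i : σ} (hi : i ∉ s) :
    specialize x s (X i) = X i := by
  simp [specialize, hi]

lemma specialize_C (x : σ → R) (s : Set σ) (r : R) : specialize x s (C r) = C r :=
  (specialize x s).commutes r

lemma span_image_X_sub_C_eq_ker_specialize (x : σ → R) (s : Set σ) :
    Ideal.span ((fun i ↦ X i - C (x i)) '' s) = RingHom.ker (specialize x s) := by
  apply le_antisymm
  · rw [Ideal.span_le]
    rintro _ ⟨i, hi, rfl⟩
    simp [specialize_X_of_mem x hi]
  · intro f hf
    set I := Ideal.span ((fun i ↦ X i - C (x i)) '' s)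
    have mk_comp_specialize :
        (Ideal.Quotient.mkₐ R I).comp (specialize x s) = Ideal.Quotient.mkₐ R I := by
      ext i
      by_cases hi : i ∈ s
      · have hmem : X i - C (x i) ∈ I := Ideal.subset_span ⟨i, hi, rfl⟩
        simpa [specialize_X_of_mem x hi] using (Ideal.Quotient.eq.mpr hmem).symm
      · simp [specialize_X_of_notMem x hi]
    rw [← Ideal.Quotient.eq_zero_iff_mem, ← Ideal.Quotient.mkₐ_eq_mk R, ← mk_comp_specialize,
      AlgHom.comp_apply, RingHom.mem_ker.mp hf, map_zero]

lemma X_sub_C_notMem_span_image [Nontrivial R] (x : σ → R) {s : Set σ} {i : σ} (hi : i ∉ s) :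
    X i - C (x i) ∉ Ideal.span ((fun j ↦ X j - C (x j)) '' s) := by
  rw [span_image_X_sub_C_eq_ker_specialize, RingHom.mem_ker, map_sub, specialize_X_of_notMem x hi,
    specialize_C]
  intro h
  simpa using congrArg (eval fun _ ↦ x i + 1) h

variable [IsDomain R]

lemma isPrime_span_image_X_sub_C (x : σ → R) (s : Set σ) :
    (Ideal.span ((fun i ↦ X i - C (x i)) '' s)).IsPrime := by
  rw [span_image_X_sub_C_eq_ker_specialize]
  exact RingHom.ker_isPrime _

lemma card_le_height_span_image_X_sub_C (x : σ → R) (s : Finset σ) :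
    s.card ≤ (Ideal.span ((fun i ↦ X i - C (x i)) '' (s : Set σ))).height := by
  classical
  induction s using Finset.induction_on with
  | empty => simp
  | insert a s ha ih =>
    have := isPrime_span_image_X_sub_C x (s : Set σ)
    have := isPrime_span_image_X_sub_C x (insert a s : Finset σ)
    have span_lt : Ideal.span ((fun i ↦ X i - C (x i)) '' (s : Set σ)) <
        Ideal.span ((fun i ↦ X i - C (x i)) '' (insert a s : Finset σ)) := by
      refine (Ideal.span_mono (Set.image_mono ?_)).lt_of_not_ge fun hle ↦ ?_
      · exact_mod_cast Finset.subset_insert a s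
      · exact X_sub_C_notMem_span_image x (by simpa using ha)
          (hle (Ideal.subset_span ⟨a, by simp, rfl⟩))
    rw [Finset.card_insert_of_notMem ha, Nat.cast_succ]
    exact (add_le_add_left ih 1).trans (Ideal.height_add_one_le_of_lt_of_isPrime span_lt)

variable [Finite σ]

lemma height_span_range_X_sub_C_le_natCard (x : σ → R) :
    (Ideal.span (Set.range fun i ↦ X i - C (x i))).height ≤ Nat.card σ := by
  let F := FractionRing R
  let : Algebra (MvPolynomial σ R) (MvPolynomial σ F) := algebraMvPolynomial
  set P := Ideal.span (Set.range fun i ↦ X i - C (x i)) with hP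
  rw [← Set.image_univ] at hP
  have : P.IsPrime := hP ▸ isPrime_span_image_X_sub_C x Set.univ
  have disjoint_constants :
      Disjoint ((nonZeroDivisors R).map (C (σ := σ)) : Set (MvPolynomial σ R)) P := by
    rw [Set.disjoint_left]
    rintro _ ⟨r, hr, rfl⟩ hrP
    rw [SetLike.mem_coe, hP, span_image_X_sub_C_eq_ker_specialize, RingHom.mem_ker, specialize_C,
      C_eq_zero] at hrP
    exact nonZeroDivisors.ne_zero hr hrP
  have map_P : P.map (algebraMap (MvPolynomial σ R) (MvPolynomial σ F)) =
      Ideal.span (Set.range fun i ↦ X i - C (algebraMap R F (x i))) := by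
    simp only [P, Ideal.map_span, ← Set.range_comp, Function.comp_def, algebraMap_def, map_sub,
      map_X, map_C]
  rw [← IsLocalization.height_map_of_disjoint _ P disjoint_constants (S := MvPolynomial σ F), map_P]
  apply height_span_range_le_natCard
  rw [← Set.image_univ]
  exact (isPrime_span_image_X_sub_C _ _).ne_top

theorem height_span_range_X_sub_C (x : σ → R) :
    (Ideal.span (Set.range fun i ↦ X i - C (x i))).height = Nat.card σ := by
  have := Fintype.ofFinite σ
  refine (height_span_range_X_sub_C_le_natCard x).antisymm ?_
  simpa using card_le_height_span_image_X_sub_C x Finset.univ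

end PointIdeal

section AffineGrid

variable {σ R : Type*} [Finite σ] [CommRing R] [IsDomain R] (B : σ → Finset R)

lemma mem_span_range_prod_X_sub_C_of_eval_eq_zero {f : MvPolynomial σ R}
    (hf : ∀ x : σ → R, (∀ i, x i ∈ B i) → eval x f = 0) :
    f ∈ Ideal.span (Set.range fun i ↦ ∏ b ∈ B i, (X i - C b)) := by
  by_cases hB : ∀ i, (B i).Nonempty
  · obtain ⟨h, -, rfl⟩ := combinatorial_nullstellensatz_exists_linearCombination B hB f hf
    exact Finsupp.mem_span_range_iff_exists_finsupp.mpr ⟨h, rfl⟩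
  · obtain ⟨i, hi⟩ := not_forall.mp hB
    have one_mem : (1 : MvPolynomial σ R) ∈
        Ideal.span (Set.range fun i ↦ ∏ b ∈ B i, (X i - C b)) :=
      Ideal.subset_span ⟨i, by simp [Finset.not_nonempty_iff_eq_empty.mp hi]⟩
    exact (Ideal.eq_top_iff_one _).mpr one_mem ▸ Submodule.mem_top

theorem height_span_range_prod_X_sub_C (hB : ∀ i, (B i).Nonempty) :
    (Ideal.span (Set.range fun i ↦ ∏ b ∈ B i, (X i - C b))).height = Nat.card σ := by
  apply le_antisymm
  · choose x hx using hB
    rw [← height_span_range_X_sub_C x]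
    refine Ideal.height_mono (Ideal.span_le.mpr ?_)
    rintro _ ⟨i, rfl⟩
    exact Ideal.mem_of_dvd _ (Finset.dvd_prod_of_mem _ (hx i)) (Ideal.subset_span ⟨i, rfl⟩)
  · rw [Ideal.height_eq_inf_minimalPrimes]
    refine le_iInf₂ fun p hp ↦ ?_
    have := hp.isPrime
    have exists_root : ∀ i, ∃ b ∈ B i, X i - C b ∈ p := fun i ↦
      Ideal.IsPrime.prod_mem_iff.mp (hp.1.2 (Ideal.subset_span ⟨i, rfl⟩))
    choose x _ hx using exists_root
    rw [← height_span_range_X_sub_C x]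
    exact Ideal.height_mono (Ideal.span_le.mpr (Set.range_subset_iff.mpr hx))

end AffineGrid

section Homogeneous

variable {R : Type*} [CommSemiring R] {n : ℕ}

lemma aeval_smul_of_isHomogeneous {σ S : Type*} [CommSemiring S] [Algebra R S]
    {f : MvPolynomial σ R} {m : ℕ} (hf : f.IsHomogeneous m) (c : S) (x : σ → S) :
    aeval (c • x) f = c ^ m * aeval x f := by
  simp only [aeval_def, eval₂_eq, Finset.mul_sum]
  refine Finset.sum_congr rfl fun d hd ↦ ?_
  have degree_d : ∑ i ∈ d.support, d i = m := (hf.degree_eq_sum_deg_support hd).symm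
  simp only [Pi.smul_apply, smul_eq_mul, mul_pow, Finset.prod_mul_distrib,
    Finset.prod_pow_eq_pow_sum, degree_d]
  ring

variable (R n) in
/-- `R[t₁, …, tₙ, u] ≃ R[u][t₁, …, tₙ]`, where `u` is the last variable. -/
noncomputable def lastVariableEquiv :
    MvPolynomial (Fin (n + 1)) R ≃ₐ[R] MvPolynomial (Fin n) (Polynomial R) :=
  (renameEquiv R finSuccEquivLast).trans (optionEquivRight R (Fin n))

lemma lastVariableEquiv_X_castSucc (i : Fin n) :
    lastVariableEquiv R n (X i.castSucc) = X i := by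
  simp [lastVariableEquiv]

lemma lastVariableEquiv_X_last :
    lastVariableEquiv R n (X (Fin.last n)) = C Polynomial.X := by
  simp [lastVariableEquiv]

lemma lastVariableEquiv_C (r : R) :
    lastVariableEquiv R n (C r) = C (Polynomial.C r) := by
  simp [lastVariableEquiv]

lemma eval_lastVariableEquiv (x : Fin n → Polynomial R) (f : MvPolynomial (Fin (n + 1)) R) :
    eval x (lastVariableEquiv R n f) =
      aeval (Fin.snoc x Polynomial.X : Fin (n + 1) → Polynomial R) f := by
  induction f using MvPolynomial.induction_on with
  | C r => simp [lastVariableEquiv_C]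
  | add p q hp hq => simp only [map_add, hp, hq]
  | mul_X p i hp =>
    rw [map_mul, map_mul, map_mul, hp]
    cases i using Fin.lastCases <;> simp [lastVariableEquiv_X_castSucc, lastVariableEquiv_X_last]

/-- The embedding `γ ↦ uγ` of `R` into `R[u]`. It carries `A₁ × ⋯ × Aₙ` to the grid over `R[u]` on
which the forms vanishing on the projective closure of `A₁ × ⋯ × Aₙ` vanish. -/
noncomputable def mulXEmbedding (R : Type*) [CommSemiring R] : R ↪ Polynomial R :=
  ⟨Polynomial.monomial 1, Polynomial.monomial_injective 1⟩

lemma mulXEmbedding_apply (r : R) : mulXEmbedding R r = Polynomial.X * Polynomial.C r := by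
  rw [Polynomial.X_mul_C, Polynomial.C_mul_X_eq_monomial]
  rfl

lemma eval_lastVariableEquiv_of_isHomogeneous {f : MvPolynomial (Fin (n + 1)) R} {m : ℕ}
    (hf : f.IsHomogeneous m) (γ : Fin n → R) :
    eval (mulXEmbedding R ∘ γ) (lastVariableEquiv R n f) =
      Polynomial.X ^ m * Polynomial.C (eval (Fin.snoc γ (1 : R)) f) := by
  have point_eq : (Fin.snoc (mulXEmbedding R ∘ γ) Polynomial.X : Fin (n + 1) → Polynomial R) =
      (Polynomial.X : Polynomial R) •
        (algebraMap R (Polynomial R) ∘ (Fin.snoc γ 1 : Fin (n + 1) → R)) := by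
    ext1 i
    cases i using Fin.lastCases <;> simp [mulXEmbedding_apply]
  rw [eval_lastVariableEquiv, point_eq, aeval_smul_of_isHomogeneous hf,
    aeval_algebraMap_apply, Polynomial.algebraMap_eq, aeval_eq_eval]

end Homogeneous

section ProjectiveGrid

variable {R : Type*} [CommRing R] {n : ℕ}

/-- The ideal `I(Y)` of the projective closure `Y` of the grid `∏ Aᵢ`: it is generated by the forms
vanishing at all points `(γ, 1)` with `γᵢ ∈ Aᵢ`, the last variable being the homogenizing one. -/
noncomputable def gridClosureIdeal (A : Fin n → Finset R) : Ideal (MvPolynomial (Fin (n + 1)) R) :=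
  Ideal.span {f | (∃ m, f.IsHomogeneous m) ∧
    ∀ γ : Fin n → R, (∀ i, γ i ∈ A i) → eval (Fin.snoc γ (1 : R)) f = 0}

/-- The form `∏_{γ ∈ Aᵢ} (tᵢ - uγ)`. -/
noncomputable def gridForm (A : Fin n → Finset R) (i : Fin n) : MvPolynomial (Fin (n + 1)) R :=
  ∏ γ ∈ A i, (X i.castSucc - X (Fin.last n) * C γ)

variable (A : Fin n → Finset R)

lemma isHomogeneous_gridForm (i : Fin n) : (gridForm A i).IsHomogeneous (A i).card := by
  rw [Finset.card_eq_sum_ones]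
  refine IsHomogeneous.prod _ _ _ fun γ _ ↦ (isHomogeneous_X R _).sub ?_
  simpa using (isHomogeneous_X R (Fin.last n)).mul (isHomogeneous_C _ γ)

lemma eval_gridForm_eq_zero {γ : Fin n → R} {i : Fin n} (hγ : γ i ∈ A i) :
    eval (Fin.snoc γ (1 : R)) (gridForm A i) = 0 := by
  rw [gridForm, map_prod]
  exact Finset.prod_eq_zero hγ (by simp)

lemma lastVariableEquiv_gridForm (i : Fin n) :
    lastVariableEquiv R n (gridForm A i) =
      ∏ b ∈ (A i).map (mulXEmbedding R), (X i - C b) := by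
  simp only [gridForm, Finset.prod_map, mulXEmbedding_apply, map_prod, map_sub, map_mul,
    lastVariableEquiv_X_castSucc, lastVariableEquiv_X_last, lastVariableEquiv_C]

lemma map_lastVariableEquiv_span_range_gridForm :
    (Ideal.span (Set.range (gridForm A))).map (lastVariableEquiv R n).toRingEquiv =
      Ideal.span (Set.range fun i ↦ ∏ b ∈ (A i).map (mulXEmbedding R), (X i - C b)) := by
  rw [Ideal.map_span, ← Set.range_comp]
  exact congrArg (Ideal.span <| Set.range ·) (funext (lastVariableEquiv_gridForm A))

variable [IsDomain R]

lemma mem_span_range_gridForm_of_isHomogeneous {f : MvPolynomial (Fin (n + 1)) R} {m : ℕ}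
    (hf : f.IsHomogeneous m)
    (hA : ∀ γ : Fin n → R, (∀ i, γ i ∈ A i) → eval (Fin.snoc γ (1 : R)) f = 0) :
    f ∈ Ideal.span (Set.range (gridForm A)) := by
  have vanishes : ∀ x : Fin n → Polynomial R, (∀ i, x i ∈ (A i).map (mulXEmbedding R)) →
      eval x (lastVariableEquiv R n f) = 0 := by
    intro x hx
    simp only [Finset.mem_map] at hx
    choose γ hγA hγx using hx
    obtain rfl : mulXEmbedding R ∘ γ = x := funext hγx
    rw [eval_lastVariableEquiv_of_isHomogeneous hf, hA γ hγA, map_zero, mul_zero]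
  have image_mem := mem_span_range_prod_X_sub_C_of_eval_eq_zero _ vanishes
  rw [← map_lastVariableEquiv_span_range_gridForm] at image_mem
  obtain ⟨g, hg, hgf⟩ := (Ideal.mem_map_of_equiv _ _).mp image_mem
  exact (lastVariableEquiv R n).injective hgf ▸ hg

theorem gridClosureIdeal_eq_span_range_gridForm :
    gridClosureIdeal A = Ideal.span (Set.range (gridForm A)) := by
  apply le_antisymm
  · refine Ideal.span_le.mpr ?_
    rintro f ⟨⟨m, hf⟩, hA⟩
    exact mem_span_range_gridForm_of_isHomogeneous A hf hA
  · refine Ideal.span_mono ?_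
    rintro _ ⟨i, rfl⟩
    exact ⟨⟨_, isHomogeneous_gridForm A i⟩, fun γ hγ ↦ eval_gridForm_eq_zero A (hγ i)⟩

theorem height_span_range_gridForm (hA : ∀ i, (A i).Nonempty) :
    (Ideal.span (Set.range (gridForm A))).height = n := by
  rw [← RingEquiv.height_map (lastVariableEquiv R n).toRingEquiv,
    map_lastVariableEquiv_span_range_gridForm,
    height_span_range_prod_X_sub_C _ fun i ↦ (hA i).map, Nat.card_fin]

end ProjectiveGrid

theorem stmt_12_general {R : Type*} [CommRing R] [IsDomain R] (n : ℕ) (A : Fin n → Finset R)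
    (hA : ∀ i, (A i).Nonempty) :
    gridClosureIdeal A = Ideal.span (Set.range (gridForm A)) ∧ (gridClosureIdeal A).height = n := by
  have span_eq := gridClosureIdeal_eq_span_range_gridForm A
  exact ⟨span_eq, span_eq ▸ height_span_range_gridForm A hA⟩

theorem stmt_12 {K : Type*} [Field K] (n : ℕ) (A : Fin n → Finset K)
    (hA : ∀ i, (A i).Nonempty) :
    Ideal.span {f : MvPolynomial (Fin (n + 1)) K |
        (∃ m, f.IsHomogeneous m) ∧
          ∀ γ : Fin n → K, (∀ i, γ i ∈ A i) →
            MvPolynomial.eval (Fin.snoc γ (1 : K)) f = 0} =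
      Ideal.span (Set.range fun i : Fin n =>
        ∏ γ ∈ A i,
          (MvPolynomial.X i.castSucc -
            MvPolynomial.X (Fin.last n) * MvPolynomial.C γ)) ∧
    sInf {h : ℕ∞ | ∃ p : PrimeSpectrum (MvPolynomial (Fin (n + 1)) K),
        Ideal.span {f : MvPolynomial (Fin (n + 1)) K |
            (∃ m, f.IsHomogeneous m) ∧
              ∀ γ : Fin n → K, (∀ i, γ i ∈ A i) →
                MvPolynomial.eval (Fin.snoc γ (1 : K)) f = 0} ≤ p.asIdeal ∧
          h = Order.height p} = (n : ℕ∞) := by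
  obtain ⟨span_eq, height_eq⟩ := stmt_12_general n A hA
  exact ⟨span_eq, (sInf_orderHeight_eq_height _).trans height_eq⟩
end

section
/- Let K be a field, A_1,...,A_n finite nonempty subsets of K with |A_i| = d_i, and Y ⊂ P^n the projective closure of X* = A_1 × ... × A_n. Then the Hilbert series of S[u]/I(Y) equals ∏_{i=1}^{n}(1 + t + ... + t^{d_i − 1}) / (1 − t). -/
/-!
Setting the homogenizing variable to `1` identifies the forms of degree `d` with the polynomials of
total degree at most `d` in the affine coordinates, and carries membership in `I(Y)` to vanishing
on the grid. Dividing by the polynomials `∏ a ∈ A i, (X i - a)` under a degree-compatible order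
replaces any polynomial by one with the same values on the grid, no larger total degree, and degree
less than `|A i|` in each variable; a polynomial reduced in this way is determined by its values on
the grid. Hence the Hilbert function at `d` counts the exponents in the box `∏ i, [0, |A i|)` of
degree at most `d`, and multiplication by `1 - X` turns these cumulative counts into the generating
polynomial of the box, which factors.
-/

open Finset MvPolynomial

section Counting

lemma mk_card_filter_le_mul_one_sub_X {S α : Type*} [CommRing S] (s : Finset α) (w : α → ℕ) :
    (PowerSeries.mk fun d => (#{a ∈ s | w a ≤ d} : S)) * (1 - PowerSeries.X) =
      ∑ a ∈ s, PowerSeries.X ^ w a := by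
  have hmk : (PowerSeries.mk fun d => (#{a ∈ s | w a ≤ d} : S)) =
      ∑ a ∈ s, PowerSeries.X ^ w a * PowerSeries.mk 1 := by
    ext d
    simp [PowerSeries.coeff_X_pow_mul']
  simp only [hmk, sum_mul, mul_assoc, PowerSeries.mk_one_mul_one_sub_eq_one, mul_one]

variable {ι : Type*} [Fintype ι]

/-- The exponents `m` of the monomials of degree less than `c i` in each variable `i`. -/
noncomputable def exponentBox (c : ι → ℕ) : Finset (ι →₀ ℕ) :=
  univ.finsupp fun i => range (c i)

lemma mem_exponentBox {c : ι → ℕ} {m : ι →₀ ℕ} : m ∈ exponentBox c ↔ ∀ i, m i < c i := by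
  simp [exponentBox, mem_finsupp_iff]

lemma sum_pow_degree_exponentBox {S : Type*} [CommSemiring S] (c : ι → ℕ) (x : S) :
    ∑ m ∈ exponentBox c, x ^ m.degree = ∏ i, ∑ j ∈ range (c i), x ^ j := by
  classical
  rw [prod_univ_sum]
  refine sum_equiv Finsupp.equivFunOnFinite (fun m => ?_) fun m _ => ?_
  · simp [mem_exponentBox]
  · simp [Finsupp.degree_eq_sum, prod_pow_eq_pow_sum]

end Counting

lemma finrank_map_eq_finrank_map {R M N P : Type*} [Ring R] [AddCommGroup M] [Module R M]
    [AddCommGroup N] [Module R N] [AddCommGroup P] [Module R P]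
    (V : Submodule R M) (f : M →ₗ[R] N) (g : M →ₗ[R] P) (h : ∀ v ∈ V, f v = 0 ↔ g v = 0) :
    Module.finrank R (V.map f) = Module.finrank R (V.map g) := by
  have hker : LinearMap.ker (f.domRestrict V) = LinearMap.ker (g.domRestrict V) := by
    ext v
    exact h v v.2
  rw [← LinearMap.range_domRestrict, ← LinearMap.range_domRestrict,
    ← (f.domRestrict V).quotKerEquivRange.finrank_eq,
    ← (g.domRestrict V).quotKerEquivRange.finrank_eq, hker]

lemma finrank_restrictSupport {R ι : Type*} [CommSemiring R] [StrongRankCondition R]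
    (s : Finset (ι →₀ ℕ)) :
    Module.finrank R (restrictSupport R (s : Set (ι →₀ ℕ))) = #s := by
  rw [Module.finrank_eq_card_basis (basisRestrictSupport R (s : Set (ι →₀ ℕ)))]
  simp

section GridEval

variable {R ι : Type*} [CommSemiring R]

/-- The restriction of polynomials to functions on the grid `∏ i, A i`. -/
noncomputable def gridEval (A : ι → Finset R) :
    MvPolynomial ι R →ₐ[R] ({x : ι → R // ∀ i, x i ∈ A i} → R) :=
  AlgHom.pi fun x => aeval x.1

@[simp]
lemma gridEval_apply (A : ι → Finset R) (p : MvPolynomial ι R)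
    (x : {x : ι → R // ∀ i, x i ∈ A i}) : gridEval A p x = eval x.1 p := by
  simp [gridEval, aeval_eq_eval]

lemma gridEval_eq_zero_iff {A : ι → Finset R} {p : MvPolynomial ι R} :
    gridEval A p = 0 ↔ ∀ x : ι → R, (∀ i, x i ∈ A i) → eval x p = 0 := by
  simp [funext_iff]

end GridEval

section GridReduction

variable {R ι : Type*} [CommRing R]

lemma degree_prod_X_sub_C [Nontrivial R] (o : MonomialOrder ι) (s : Finset R) (i : ι) :
    o.degree (∏ a ∈ s, (X i - C a)) = Finsupp.single i #s := by
  rw [o.degree_prod_of_regular fun a _ => by rw [o.monic_X_sub_C]; exact isRegular_one]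
  simp [o.degree_X_sub_C]

variable [Fintype ι]

lemma exists_mem_restrictSupport_exponentBox_gridEval_eq [Nontrivial R] (A : ι → Finset R)
    (p : MvPolynomial ι R) :
    ∃ r ∈ restrictSupport R (exponentBox fun i => #(A i) : Set (ι →₀ ℕ)),
      r.totalDegree ≤ p.totalDegree ∧ gridEval A r = gridEval A p := by
  let _ : LinearOrder ι := WellOrderingRel.isWellOrder.linearOrder
  let o : MonomialOrder ι := MonomialOrder.degLex
  let b (i : ι) : MvPolynomial ι R := ∏ a ∈ A i, (X i - C a)
  have hb_monic (i : ι) : o.Monic (b i) := .prod fun a _ => o.monic_X_sub_C i a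
  have hb_zero (i : ι) : gridEval A (b i) = 0 :=
    gridEval_eq_zero_iff.2 fun x hx => by
      rw [eval_prod]
      exact prod_eq_zero (hx i) (by simp)
  obtain ⟨g, r, hp, hdeg, hr⟩ :=
    o.div (b := b) (fun i => by simp [(hb_monic i).leadingCoeff_eq_one]) p
  have hr_eq : r = p - Finsupp.linearCombination _ b g := by rw [hp, add_sub_cancel_left]
  refine ⟨r, fun m hm => ?_, ?_, ?_⟩
  · simpa [mem_exponentBox, b, degree_prod_X_sub_C] using hr m hm
  · have hmem : r ∈ restrictTotalDegree ι R p.totalDegree := by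
      rw [hr_eq, Finsupp.linearCombination_apply]
      refine sub_mem ((mem_restrictTotalDegree ..).2 le_rfl) (sum_mem fun i _ => ?_)
      have hterm : (g i • b i).totalDegree ≤ p.totalDegree := by
        rw [smul_eq_mul, mul_comm]
        exact degLex_totalDegree_monotone (hdeg i)
      exact (mem_restrictTotalDegree ..).2 hterm
    exact (mem_restrictTotalDegree ..).1 hmem
  · simp [hr_eq, Finsupp.linearCombination_apply, map_finsuppSum, hb_zero]

lemma eq_zero_of_gridEval_eq_zero [IsDomain R] {A : ι → Finset R} {p : MvPolynomial ι R}
    (hp : p ∈ restrictSupport R (exponentBox fun i => #(A i) : Set (ι →₀ ℕ)))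
    (h : gridEval A p = 0) : p = 0 := by
  by_contra hp0
  obtain ⟨m₀, hm₀⟩ := support_nonempty.2 hp0
  refine hp0 (eq_zero_of_eval_zero_at_prod_finset p A (fun i => ?_) (gridEval_eq_zero_iff.1 h))
  have hpos : 0 < #(A i) := (Nat.zero_le _).trans_lt (mem_exponentBox.1 (hp hm₀) i)
  exact (degreeOf_lt_iff hpos).2 fun m hm => mem_exponentBox.1 (hp hm) i

lemma map_gridEval_restrictTotalDegree [Nontrivial R] (A : ι → Finset R) (d : ℕ) :
    (restrictTotalDegree ι R d).map (gridEval A).toLinearMap =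
      (restrictSupport R ({m ∈ exponentBox fun i => #(A i) | m.degree ≤ d} : Finset (ι →₀ ℕ))).map
        (gridEval A).toLinearMap := by
  apply le_antisymm
  · rintro _ ⟨p, hp, rfl⟩
    obtain ⟨r, hr_box, hr_deg, hr_eval⟩ := exists_mem_restrictSupport_exponentBox_gridEval_eq A p
    have hrd : r.totalDegree ≤ d := hr_deg.trans ((mem_restrictTotalDegree ..).1 hp)
    refine ⟨r, fun m hm => ?_, hr_eval⟩
    exact mem_coe.2 (mem_filter.2 ⟨hr_box hm, (le_totalDegree hm).trans hrd⟩)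
  · exact Submodule.map_mono (restrictSupport_mono _ fun m hm => (mem_filter.1 hm).2)

lemma finrank_map_gridEval_restrictTotalDegree [IsDomain R] (A : ι → Finset R) (d : ℕ) :
    Module.finrank R ((restrictTotalDegree ι R d).map (gridEval A).toLinearMap) =
      #{m ∈ exponentBox fun i => #(A i) | m.degree ≤ d} := by
  rw [map_gridEval_restrictTotalDegree, finrank_map_eq_finrank_map _ _ LinearMap.id,
    Submodule.map_id, finrank_restrictSupport]
  intro p hp
  have hp_box : p ∈ restrictSupport R (exponentBox fun i => #(A i) : Set (ι →₀ ℕ)) :=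
    restrictSupport_mono _ (coe_subset.2 (filter_subset _ _)) hp
  exact ⟨eq_zero_of_gridEval_eq_zero hp_box, fun (h : p = 0) => by rw [h, map_zero]⟩

end GridReduction

section ProjectiveClosure

variable {R : Type*} [CommSemiring R] {n : ℕ}

/-- Substitution of `1` for the homogenizing variable, which is the last one. -/
noncomputable def dehomogenize : MvPolynomial (Fin (n + 1)) R →ₐ[R] MvPolynomial (Fin n) R :=
  aeval (Fin.snoc X 1)

lemma eval_dehomogenize (x : Fin n → R) (f : MvPolynomial (Fin (n + 1)) R) :
    eval x (dehomogenize f) = eval (Fin.snoc x 1) f := by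
  induction f using MvPolynomial.induction_on with
  | C a => simp [dehomogenize]
  | add p q hp hq => simp [hp, hq]
  | mul_X p i hp => cases i using Fin.lastCases <;> simp_all [dehomogenize]

lemma dehomogenize_monomial (m : Fin (n + 1) →₀ ℕ) (a : R) :
    dehomogenize (monomial m a) =
      monomial (Finsupp.equivFunOnFinite.symm fun i => m i.castSucc) a := by
  simp [dehomogenize, Finsupp.prod_fintype, Fin.prod_univ_castSucc, monomial_eq]

lemma map_dehomogenize_homogeneousSubmodule (d : ℕ) :
    (homogeneousSubmodule (Fin (n + 1)) R d).map dehomogenize.toLinearMap =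
      restrictTotalDegree (Fin n) R d := by
  apply le_antisymm
  · rintro _ ⟨f, hf, rfl⟩
    rw [AlgHom.toLinearMap_apply, f.as_sum, map_sum]
    refine sum_mem fun m hm => ?_
    have hm_deg : ∑ i : Fin n, m i.castSucc + m (Fin.last n) = d := by
      rw [← Fin.sum_univ_castSucc, ← Finsupp.degree_eq_sum, Finsupp.degree_eq_weight_one]
      exact hf (mem_support_iff.1 hm)
    rw [dehomogenize_monomial]
    have hle : (Finsupp.equivFunOnFinite.symm fun i : Fin n => m i.castSucc).degree ≤ d := by
      rw [Finsupp.degree_eq_sum, ← hm_deg]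
      exact Nat.le_add_right _ _
    exact (monomial_mem_restrictSupport R).2 (.inl hle)
  · rw [restrictTotalDegree, restrictSupport_eq_span, Submodule.span_le]
    rintro _ ⟨m, hm, rfl⟩
    replace hm : m.degree ≤ d := hm
    refine ⟨monomial (Finsupp.equivFunOnFinite.symm (Fin.snoc m (d - m.degree))) 1,
      isHomogeneous_monomial _ ?_, ?_⟩
    · rw [Finsupp.degree_eq_sum, Fin.sum_univ_castSucc]
      simpa [← Finsupp.degree_eq_sum] using Nat.add_sub_cancel' hm
    · simp [dehomogenize_monomial]

/-- The homogeneous vanishing ideal of the projective closure of the grid `∏ i, A i`, generated by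
the forms that vanish at the grid points, embedded in the chart where the last coordinate is `1`. -/
noncomputable def projectiveGridIdeal (A : Fin n → Finset R) :
    Ideal (MvPolynomial (Fin (n + 1)) R) :=
  Ideal.span {f | (∃ m, f.IsHomogeneous m) ∧
    ∀ γ : Fin n → R, (∀ i, γ i ∈ A i) → eval (Fin.snoc γ 1) f = 0}

lemma mem_projectiveGridIdeal_iff {A : Fin n → Finset R} {f : MvPolynomial (Fin (n + 1)) R}
    {d : ℕ} (hf : f.IsHomogeneous d) :
    f ∈ projectiveGridIdeal A ↔ gridEval A (dehomogenize f) = 0 := by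
  constructor
  · have hle : projectiveGridIdeal A ≤ RingHom.ker ((gridEval A).comp dehomogenize) :=
      Ideal.span_le.2 fun p hp => gridEval_eq_zero_iff.2 fun x hx => by
        rw [AlgHom.coe_toRingHom, eval_dehomogenize, hp.2 x hx]
    exact fun h => hle h
  · intro h
    refine Ideal.subset_span ⟨⟨d, hf⟩, fun x hx => ?_⟩
    rw [← eval_dehomogenize, gridEval_eq_zero_iff.1 h x hx]

lemma finrank_map_mk_projectiveGridIdeal {R : Type*} [CommRing R] [IsDomain R]
    (A : Fin n → Finset R) (d : ℕ) :
    Module.finrank R ((homogeneousSubmodule (Fin (n + 1)) R d).map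
        (Ideal.Quotient.mkₐ R (projectiveGridIdeal A)).toLinearMap) =
      #{m ∈ exponentBox fun i => #(A i) | m.degree ≤ d} := by
  rw [← finrank_map_gridEval_restrictTotalDegree, ← map_dehomogenize_homogeneousSubmodule,
    ← Submodule.map_comp]
  refine finrank_map_eq_finrank_map _ _ _ fun f hf => ?_
  simpa [Ideal.Quotient.eq_zero_iff_mem] using mem_projectiveGridIdeal_iff hf

end ProjectiveClosure

theorem stmt_13_general {R : Type*} [CommRing R] [IsDomain R] {n : ℕ} (A : Fin n → Finset R) :
    (PowerSeries.mk fun d : ℕ =>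
        (Module.finrank R
          ((homogeneousSubmodule (Fin (n + 1)) R d).map
            (Ideal.Quotient.mkₐ R (projectiveGridIdeal A)).toLinearMap) : ℤ)) *
        (1 - PowerSeries.X) =
      ∏ i : Fin n, ∑ j ∈ range #(A i), (PowerSeries.X : PowerSeries ℤ) ^ j := by
  simp only [finrank_map_mk_projectiveGridIdeal]
  rw [mk_card_filter_le_mul_one_sub_X, sum_pow_degree_exponentBox]

theorem stmt_13 {K : Type*} [Field K] (n : ℕ) (A : Fin n → Finset K)
    (hA : ∀ i, (A i).Nonempty)
    (I : Ideal (MvPolynomial (Fin (n + 1)) K))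
    (hI : I = Ideal.span {f : MvPolynomial (Fin (n + 1)) K |
        (∃ m, f.IsHomogeneous m) ∧
          ∀ γ : Fin n → K, (∀ i, γ i ∈ A i) →
            MvPolynomial.eval (Fin.snoc γ (1 : K)) f = 0}) :
    (PowerSeries.mk fun d : ℕ =>
        (Module.finrank K
          ((MvPolynomial.homogeneousSubmodule (Fin (n + 1)) K d).map
            (Ideal.Quotient.mkₐ K I).toLinearMap) : ℤ)) *
        (1 - PowerSeries.X) =
      ∏ i : Fin n, ∑ j ∈ Finset.range (A i).card, (PowerSeries.X : PowerSeries ℤ) ^ j :=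
  hI ▸ stmt_13_general A
end

section
/- Let K = F_q be a finite field with q ≥ 3, n ≥ 1, and X* = (K*)^n. For 1 ≤ d ≤ n(q−2) − 1, write d = k(q−2) + ℓ with k ≥ 0 and 1 ≤ ℓ ≤ q−2. Then the minimum distance of the evaluation code C_{X*}(d) equals (q−1)^{n−k−1}(q−1−ℓ); and for d ≥ n(q−2) the minimum distance is 1. -/
/-!
The torus is a grid `A 0 × ⋯ × A (n - 1)` of finite subsets of a domain, and the weight of a
codeword is the number of points of the grid at which a polynomial `f` does not vanish. The
Alon–Füredi theorem bounds this number below by `∏ y i` for some integers `1 ≤ y i ≤ #(A i)` with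
`∑ (#(A i) - y i) ≤ deg f`: if `Z ⊆ A 0` is the set of `a` for which `f(a, ·)` vanishes on the
remaining grid, then on the grid `f` agrees with `∏ a ∈ Z, (X 0 - a) * g` where
`deg g ≤ deg f - #Z`, so induction applied to a slice of `g` gives the bound with
`y 0 = #(A 0) - #Z`. Products of linear forms attain every such `∏ y i`. The minimum distance is
thus the least product of integers in `[1, m]` whose sum is bounded below, and this is reached when
all but one of the factors are `1` or `m`.
-/

open Finset MvPolynomial

section CommRing

variable {R : Type*} [CommRing R] {n : ℕ}

/-- The polynomial `f(a, ·)` in the last `n` variables, obtained from `f` by specializing the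
variable of index `0` to `a`. -/
noncomputable def headSlice (a : R) (f : MvPolynomial (Fin (n + 1)) R) : MvPolynomial (Fin n) R :=
  bind₁ (Fin.cons (C a) X) f

lemma eval_headSlice (a : R) (f : MvPolynomial (Fin (n + 1)) R) (x : Fin n → R) :
    eval x (headSlice a f) = eval (Fin.cons a x) f := by
  have hcons : (fun i ↦ eval x ((Fin.cons (C a) X : Fin (n + 1) → MvPolynomial (Fin n) R) i)) =
      Fin.cons a x := by
    ext i
    cases i using Fin.cases <;> simp
  rw [← hcons]
  exact eval₂Hom_bind₁ (RingHom.id R) x _ f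

lemma totalDegree_bind₁_le {σ τ : Type*} {φ : σ → MvPolynomial τ R}
    (hφ : ∀ i, (φ i).totalDegree ≤ 1) (f : MvPolynomial σ R) :
    (bind₁ φ f).totalDegree ≤ f.totalDegree := by
  rw [← aeval_eq_bind₁, aeval_def, eval₂_eq]
  refine totalDegree_finsetSum_le fun e he ↦ ?_
  calc (C (coeff e f) * ∏ i ∈ e.support, φ i ^ e i).totalDegree
      ≤ (∏ i ∈ e.support, φ i ^ e i).totalDegree := by
        simpa using totalDegree_mul (C (coeff e f)) (∏ i ∈ e.support, φ i ^ e i)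
    _ ≤ ∑ i ∈ e.support, (φ i ^ e i).totalDegree := totalDegree_finsetProd _ _
    _ ≤ ∑ i ∈ e.support, e i := sum_le_sum fun i _ ↦
        (totalDegree_pow _ _).trans (mul_le_of_le_one_right' (hφ i))
    _ ≤ f.totalDegree := le_totalDegree he

lemma totalDegree_headSlice_le (a : R) (f : MvPolynomial (Fin (n + 1)) R) :
    (headSlice a f).totalDegree ≤ f.totalDegree := by
  cases subsingleton_or_nontrivial R
  · simp [Subsingleton.elim (headSlice a f) 0]
  refine totalDegree_bind₁_le (fun i ↦ ?_) f
  cases i using Fin.cases <;> simp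

lemma X_zero_sub_C_dvd_sub_rename_headSlice (a : R) (f : MvPolynomial (Fin (n + 1)) R) :
    X 0 - C a ∣ f - rename Fin.succ (headSlice a f) := by
  let I : Ideal (MvPolynomial (Fin (n + 1)) R) := Ideal.span {X 0 - C a}
  have hX : Ideal.Quotient.mkₐ R I (C a) = Ideal.Quotient.mkₐ R I (X 0) :=
    ((Ideal.Quotient.mk_eq_mk_iff_sub_mem _ _).2 (Ideal.mem_span_singleton_self _)).symm
  have hcomp : ((Ideal.Quotient.mkₐ R I).comp (rename Fin.succ)).comp
      (bind₁ (Fin.cons (C a) X)) = Ideal.Quotient.mkₐ R I := by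
    ext i
    cases i using Fin.cases with
    | zero => simpa [-Ideal.Quotient.mkₐ_eq_mk] using hX
    | succ i => simp
  rw [← Ideal.mem_span_singleton, ← Ideal.Quotient.mk_eq_mk_iff_sub_mem]
  exact (DFunLike.congr_fun hcomp f).symm

lemma totalDegree_X_sub_C [Nontrivial R] {σ : Type*} (i : σ) (a : R) :
    (X i - C a : MvPolynomial σ R).totalDegree = 1 := by
  rw [sub_eq_add_neg, ← C_neg, totalDegree_add_eq_left_of_totalDegree_lt] <;> simp

/-- The points of the grid `∏ i, A i` at which `f` does not vanish, that is, the support of the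
codeword of `f`. -/
noncomputable def gridNonzeros [DecidableEq R] (A : Fin n → Finset R) (f : MvPolynomial (Fin n) R) :
    Finset (Fin n → R) :=
  {x ∈ Fintype.piFinset A | eval x f ≠ 0}

/-- The weights of the nonzero codewords of the evaluation code of degree `d` on the grid
`∏ i, A i`; their minimum is the minimum distance of this linear code. -/
def gridCodeWeights [DecidableEq R] (A : Fin n → Finset R) (d : ℕ) : Set ℕ :=
  {w | ∃ f : MvPolynomial (Fin n) R,
    f.totalDegree ≤ d ∧ (gridNonzeros A f).Nonempty ∧ w = #(gridNonzeros A f)}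

lemma mem_gridNonzeros [DecidableEq R] {A : Fin n → Finset R} {f : MvPolynomial (Fin n) R}
    {x : Fin n → R} : x ∈ gridNonzeros A f ↔ (∀ i, x i ∈ A i) ∧ eval x f ≠ 0 := by
  simp [gridNonzeros]

lemma cons_mem_gridNonzeros [DecidableEq R] {A : Fin (n + 1) → Finset R}
    {f : MvPolynomial (Fin (n + 1)) R} {a : R} {x : Fin n → R} :
    Fin.cons a x ∈ gridNonzeros A f ↔
      a ∈ A 0 ∧ x ∈ gridNonzeros (Fin.tail A) (headSlice a f) := by
  simp [mem_gridNonzeros, eval_headSlice, Fin.forall_fin_succ, Fin.tail, and_assoc]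

lemma card_gridNonzeros_succ [DecidableEq R] (A : Fin (n + 1) → Finset R)
    (f : MvPolynomial (Fin (n + 1)) R) :
    #(gridNonzeros A f) = ∑ a ∈ A 0, #(gridNonzeros (Fin.tail A) (headSlice a f)) := by
  rw [← card_sigma]
  refine card_nbij' (fun x ↦ ⟨x 0, Fin.tail x⟩) (fun p ↦ Fin.cons p.1 p.2) ?_ ?_ ?_ ?_
  · intro x hx
    rw [← Fin.cons_self_tail x, mem_coe, cons_mem_gridNonzeros] at hx
    simpa using hx
  · rintro ⟨a, x⟩ hp
    simpa [cons_mem_gridNonzeros] using hp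
  · intro x _
    exact Fin.cons_self_tail x
  · rintro ⟨a, x⟩ _
    simp

end CommRing

section IsDomain

variable {R : Type*} [CommRing R] [IsDomain R] {n : ℕ}

lemma exists_eval_cons_eq_sub_mul {S : Set (Fin n → R)} {f : MvPolynomial (Fin (n + 1)) R} {a : R}
    (ha : ∀ x ∈ S, eval (Fin.cons a x) f = 0) (hf : ∃ b, ∃ x ∈ S, eval (Fin.cons b x) f ≠ 0) :
    ∃ g : MvPolynomial (Fin (n + 1)) R, g.totalDegree + 1 ≤ f.totalDegree ∧
      ∀ b, ∀ x ∈ S, eval (Fin.cons b x) f = (b - a) * eval (Fin.cons b x) g := by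
  obtain ⟨g, hg⟩ := X_zero_sub_C_dvd_sub_rename_headSlice a f
  have hfg : ∀ b, ∀ x ∈ S, eval (Fin.cons b x) f = (b - a) * eval (Fin.cons b x) g := by
    intro b x hx
    have hrename : eval (Fin.cons b x) (rename Fin.succ (headSlice a f)) = 0 := by
      rw [eval_rename, Fin.cons_comp_succ, eval_headSlice, ha x hx]
    simpa [hrename] using congrArg (eval (Fin.cons b x)) hg
  have hg0 : g ≠ 0 := by
    rintro rfl
    obtain ⟨b, x, hx, hne⟩ := hf
    exact hne (by simp [hfg b x hx])
  have hX0 : (X 0 - C a : MvPolynomial (Fin (n + 1)) R) ≠ 0 := fun h ↦ by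
    simpa [h] using totalDegree_X_sub_C (0 : Fin (n + 1)) a
  refine ⟨g, ?_, hfg⟩
  calc g.totalDegree + 1 = ((X 0 - C a) * g).totalDegree := by
        rw [totalDegree_mul_of_isDomain hX0 hg0, totalDegree_X_sub_C, add_comm]
    _ = (f - rename Fin.succ (headSlice a f)).totalDegree := by rw [hg]
    _ ≤ f.totalDegree := (totalDegree_sub _ _).trans <| max_le le_rfl <|
        (totalDegree_rename_le _ _).trans (totalDegree_headSlice_le a f)

lemma exists_eval_cons_eq_prod_sub_mul {S : Set (Fin n → R)} {f : MvPolynomial (Fin (n + 1)) R}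
    {Z : Finset R} (hZ : ∀ a ∈ Z, ∀ x ∈ S, eval (Fin.cons a x) f = 0)
    (hf : ∃ b, ∃ x ∈ S, eval (Fin.cons b x) f ≠ 0) :
    ∃ g : MvPolynomial (Fin (n + 1)) R, g.totalDegree + #Z ≤ f.totalDegree ∧
      ∀ b, ∀ x ∈ S, eval (Fin.cons b x) f = (∏ a ∈ Z, (b - a)) * eval (Fin.cons b x) g := by
  classical
  induction Z using Finset.induction_on generalizing f with
  | empty => exact ⟨f, by simp, by simp⟩
  | insert c Z hc ih =>
    obtain ⟨g, hdeg, hfg⟩ := exists_eval_cons_eq_sub_mul (hZ c (mem_insert_self c Z)) hf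
    have hgZ : ∀ a ∈ Z, ∀ x ∈ S, eval (Fin.cons a x) g = 0 := by
      intro a ha x hx
      have hac : a - c ≠ 0 := sub_ne_zero.2 (ne_of_mem_of_not_mem ha hc)
      have hmul := hZ a (mem_insert_of_mem ha) x hx
      rw [hfg a x hx] at hmul
      exact (mul_eq_zero.1 hmul).resolve_left hac
    have hg : ∃ b, ∃ x ∈ S, eval (Fin.cons b x) g ≠ 0 := by
      obtain ⟨b, x, hx, hne⟩ := hf
      exact ⟨b, x, hx, right_ne_zero_of_mul (hfg b x hx ▸ hne)⟩
    obtain ⟨h, hdeg', hgh⟩ := ih hgZ hg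
    refine ⟨h, ?_, fun b x hx ↦ ?_⟩
    · rw [card_insert_of_notMem hc]
      lia
    · rw [hfg b x hx, hgh b x hx, prod_insert hc, mul_assoc]

variable [DecidableEq R]

lemma exists_gridNonzeros_headSlice_eq {A : Fin (n + 1) → Finset R} {f : MvPolynomial (Fin (n + 1)) R}
    (hf : (gridNonzeros A f).Nonempty) :
    ∃ g : MvPolynomial (Fin (n + 1)) R,
      g.totalDegree + #{a ∈ A 0 | ¬ (gridNonzeros (Fin.tail A) (headSlice a f)).Nonempty} ≤
        f.totalDegree ∧
      ∀ a, (gridNonzeros (Fin.tail A) (headSlice a f)).Nonempty →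
        gridNonzeros (Fin.tail A) (headSlice a g) = gridNonzeros (Fin.tail A) (headSlice a f) := by
  set Z := {a ∈ A 0 | ¬ (gridNonzeros (Fin.tail A) (headSlice a f)).Nonempty}
  have hZ : ∀ a ∈ Z, ∀ x ∈ {x : Fin n → R | ∀ i, x i ∈ A i.succ}, eval (Fin.cons a x) f = 0 := by
    intro a ha x hx
    by_contra hne
    exact (mem_filter.1 ha).2 ⟨x, mem_gridNonzeros.2 ⟨hx, by rwa [eval_headSlice]⟩⟩
  obtain ⟨x, hx⟩ := hf
  obtain ⟨hxA, hxf⟩ := mem_gridNonzeros.1 hx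
  obtain ⟨g, hdeg, hfg⟩ := exists_eval_cons_eq_prod_sub_mul hZ
    ⟨x 0, Fin.tail x, fun i ↦ hxA i.succ, by rwa [Fin.cons_self_tail]⟩
  refine ⟨g, hdeg, fun a hne ↦ ?_⟩
  have hprod : ∏ b ∈ Z, (a - b) ≠ 0 := prod_ne_zero_iff.2 fun b hb hab ↦
    (mem_filter.1 hb).2 (sub_eq_zero.1 hab ▸ hne)
  ext y
  simp only [mem_gridNonzeros, eval_headSlice]
  refine and_congr_right fun hy ↦ ?_
  rw [hfg a y hy, mul_ne_zero_iff_left hprod]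

/-- The **Alon–Füredi theorem**. -/
theorem exists_prod_le_card_gridNonzeros (A : Fin n → Finset R) (f : MvPolynomial (Fin n) R)
    (hf : (gridNonzeros A f).Nonempty) :
    ∃ y : Fin n → ℕ, (∀ i, 1 ≤ y i ∧ y i ≤ #(A i)) ∧
      ∑ i, #(A i) ≤ ∑ i, y i + f.totalDegree ∧ ∏ i, y i ≤ #(gridNonzeros A f) := by
  induction n with
  | zero => exact ⟨Fin.elim0, fun i ↦ i.elim0, by simp, by simpa using hf⟩
  | succ n ih =>
    obtain ⟨g, hdeg, hslice⟩ := exists_gridNonzeros_headSlice_eq hf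
    set Y := {a ∈ A 0 | (gridNonzeros (Fin.tail A) (headSlice a f)).Nonempty}
    have hY : Y.Nonempty := by
      obtain ⟨x, hx⟩ := hf
      rw [← Fin.cons_self_tail x, cons_mem_gridNonzeros] at hx
      exact ⟨x 0, mem_filter.2 ⟨hx.1, _, hx.2⟩⟩
    obtain ⟨a, haY, hmin⟩ :=
      exists_min_image Y (fun a ↦ #(gridNonzeros (Fin.tail A) (headSlice a f))) hY
    have hane := (mem_filter.1 haY).2
    obtain ⟨y, hy, hsum, hprod⟩ :=
      ih (Fin.tail A) (headSlice a g) (by rwa [hslice a hane])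
    rw [hslice a hane] at hprod
    refine ⟨Fin.cons #Y y, Fin.forall_fin_succ.2 ⟨?_, by simpa [Fin.tail] using hy⟩, ?_, ?_⟩
    · exact ⟨hY.card_pos, card_filter_le _ _⟩
    · have hcard := card_filter_add_card_filter_not (s := A 0)
        fun a ↦ (gridNonzeros (Fin.tail A) (headSlice a f)).Nonempty
      have hga := totalDegree_headSlice_le a g
      simp only [Fin.sum_univ_succ, Fin.cons_zero, Fin.cons_succ, Fin.tail] at hsum ⊢
      lia
    · calc ∏ i, (Fin.cons #Y y : Fin (n + 1) → ℕ) i = #Y * ∏ i, y i := by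
            simp [Fin.prod_univ_succ]
        _ ≤ #Y * #(gridNonzeros (Fin.tail A) (headSlice a f)) := Nat.mul_le_mul_left _ hprod
        _ ≤ ∑ b ∈ Y, #(gridNonzeros (Fin.tail A) (headSlice b f)) :=
            card_nsmul_le_sum _ _ _ hmin
        _ ≤ ∑ b ∈ A 0, #(gridNonzeros (Fin.tail A) (headSlice b f)) :=
            sum_le_sum_of_subset (filter_subset _ _)
        _ = #(gridNonzeros A f) := (card_gridNonzeros_succ A f).symm

theorem exists_card_gridNonzeros_eq_prod (A : Fin n → Finset R) {y : Fin n → ℕ}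
    (hy : ∀ i, y i ≤ #(A i)) :
    ∃ f : MvPolynomial (Fin n) R,
      f.totalDegree + ∑ i, y i ≤ ∑ i, #(A i) ∧ #(gridNonzeros A f) = ∏ i, y i := by
  choose B hBA hBcard using fun i ↦ exists_subset_card_eq (hy i)
  refine ⟨∏ i, ∏ a ∈ A i \ B i, (X i - C a), ?_, ?_⟩
  · have hdeg : (∏ i, ∏ a ∈ A i \ B i, (X i - C a : MvPolynomial (Fin n) R)).totalDegree ≤
        ∑ i, #(A i \ B i) := by
      refine (totalDegree_finsetProd _ _).trans (sum_le_sum fun i _ ↦ ?_)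
      refine (totalDegree_finsetProd _ _).trans ?_
      simp [totalDegree_X_sub_C]
    calc _ ≤ ∑ i, #(A i \ B i) + ∑ i, y i := Nat.add_le_add_right hdeg _
      _ = ∑ i, #(A i) := by
        rw [← sum_add_distrib]
        exact sum_congr rfl fun i _ ↦ by rw [← hBcard, card_sdiff_add_card_eq_card (hBA i)]
  · have hgrid : gridNonzeros A (∏ i, ∏ a ∈ A i \ B i, (X i - C a)) = Fintype.piFinset B := by
      ext x
      simp only [mem_gridNonzeros, map_prod, map_sub, eval_X, eval_C, prod_ne_zero_iff,
        sub_ne_zero, Fintype.mem_piFinset, mem_sdiff, mem_univ, forall_const]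
      refine ⟨fun ⟨hxA, hx⟩ i ↦ ?_, fun hx ↦ ⟨fun i ↦ hBA i (hx i), ?_⟩⟩
      · by_contra hxB
        exact hx i (x i) ⟨hxA i, hxB⟩ rfl
      · rintro i a ⟨_, haB⟩ rfl
        exact haB (hx i)
    rw [hgrid, Fintype.card_piFinset]
    exact prod_congr rfl fun i _ ↦ hBcard i

end IsDomain

section Extremal

lemma pow_mul_le_prod_of_le_sum {ι : Type*} {s : ℕ} (t : Finset ι) {y : ι → ℕ}
    (hy : ∀ i ∈ t, 1 ≤ y i ∧ y i ≤ s + 1) {r c : ℕ} (hsum : r * s + c + #t ≤ ∑ i ∈ t, y i) :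
    (s + 1) ^ r * (c + 1) ≤ ∏ i ∈ t, y i := by
  classical
  induction t using Finset.induction_on generalizing r c with
  | empty =>
    have hc : c = 0 := by simp_all
    have hrs : r = 0 ∨ s = 0 := by simp_all
    rcases hrs with rfl | rfl <;> simp [hc]
  | insert i t hi ih =>
    rw [sum_insert hi, card_insert_of_notMem hi] at hsum
    rw [prod_insert hi]
    obtain ⟨hi1, his⟩ := hy i (mem_insert_self i t)
    replace ih {r c : ℕ} := ih (r := r) (c := c) fun j hj ↦ hy j (mem_insert_of_mem hj)
    obtain ⟨x, hx⟩ := Nat.exists_eq_add_of_le' hi1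
    rw [hx] at his hsum ⊢
    obtain hxc | hcx := le_total x c
    · obtain ⟨e, rfl⟩ := Nat.exists_eq_add_of_le hxc
      calc (s + 1) ^ r * (x + e + 1) ≤ (s + 1) ^ r * ((x + 1) * (e + 1)) :=
            Nat.mul_le_mul_left _ (by nlinarith [Nat.zero_le (x * e)])
        _ = (x + 1) * ((s + 1) ^ r * (e + 1)) := by ring
        _ ≤ (x + 1) * ∏ j ∈ t, y j := Nat.mul_le_mul_left _ (ih (by lia))
    · obtain ⟨e, rfl⟩ := Nat.exists_eq_add_of_le hcx
      obtain ⟨v, rfl⟩ := Nat.exists_eq_add_of_le (Nat.le_of_succ_le_succ his)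
      cases r with
      | zero =>
        have hone : 1 ≤ ∏ j ∈ t, y j := one_le_prod' fun j hj ↦ (hy j (mem_insert_of_mem hj)).1
        calc _ = c + 1 := by simp
          _ ≤ (c + e + 1) * 1 := by lia
          _ ≤ (c + e + 1) * ∏ j ∈ t, y j := Nat.mul_le_mul_left _ hone
      | succ r =>
        calc (c + e + v + 1) ^ (r + 1) * (c + 1)
            = (c + e + v + 1) ^ r * ((c + e + v + 1) * (c + 1)) := by ring
          _ ≤ (c + e + v + 1) ^ r * ((c + e + 1) * (c + v + 1)) :=
              Nat.mul_le_mul_left _ (by nlinarith [Nat.zero_le (e * v)])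
          _ = (c + e + 1) * ((c + e + v + 1) ^ r * (c + v + 1)) := by ring
          _ ≤ (c + e + 1) * ∏ j ∈ t, y j := Nat.mul_le_mul_left _ (ih (by lia))

lemma exists_prod_eq_pow_mul {s c : ℕ} (hc : c ≤ s) (k r : ℕ) :
    ∃ y : Fin (k + 1 + r) → ℕ, (∀ i, 1 ≤ y i ∧ y i ≤ s + 1) ∧
      ∑ i, y i = k + (c + 1) + r * (s + 1) ∧ ∏ i, y i = (s + 1) ^ r * (c + 1) := by
  refine ⟨Fin.append (Fin.append (fun _ ↦ 1) fun _ ↦ c + 1) fun _ ↦ s + 1, fun i ↦ ?_, ?_, ?_⟩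
  · refine i.addCases (fun i ↦ i.addCases ?_ ?_) ?_ <;> simp [hc]
  · simp [Fin.sum_univ_add]
  · simp [Fin.prod_univ_add, mul_comm]

end Extremal

section MinimumDistance

variable {R : Type*} [CommRing R] [IsDomain R] [DecidableEq R] {n : ℕ}

lemma prod_mem_gridCodeWeights {A : Fin n → Finset R} {y : Fin n → ℕ} {d : ℕ}
    (hy : ∀ i, 1 ≤ y i ∧ y i ≤ #(A i)) (hd : ∑ i, #(A i) ≤ d + ∑ i, y i) :
    ∏ i, y i ∈ gridCodeWeights A d := by
  obtain ⟨f, hdeg, hcard⟩ := exists_card_gridNonzeros_eq_prod A fun i ↦ (hy i).2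
  refine ⟨f, by lia, ?_, hcard.symm⟩
  rw [← card_pos, hcard]
  exact prod_pos fun i _ ↦ (hy i).1

lemma isLeast_gridCodeWeights_of_card_eq {A : Fin n → Finset R} {m k l : ℕ} (hm : 0 < m)
    (hA : ∀ i, #(A i) = m) (hk : k < n) (hl : l ≤ m - 1) :
    IsLeast (gridCodeWeights A (k * (m - 1) + l)) (m ^ (n - k - 1) * (m - l)) := by
  obtain ⟨s, rfl⟩ := Nat.exists_eq_add_of_le' hm
  obtain ⟨r, rfl⟩ := Nat.exists_eq_add_of_le (Nat.succ_le_of_lt hk)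
  rw [Nat.add_sub_cancel] at hl ⊢
  obtain ⟨c, rfl⟩ := Nat.exists_eq_add_of_le hl
  have hsumA : ∑ i, #(A i) = (k + 1 + r) * (l + c + 1) := by simp [hA]
  have hexp : k + 1 + r - k - 1 = r := by lia
  have hfactor : l + c + 1 - l = c + 1 := by lia
  rw [hexp, hfactor]
  constructor
  · obtain ⟨y, hy, hsum, hprod⟩ := exists_prod_eq_pow_mul (Nat.le_add_left c l) k r
    rw [← hprod]
    exact prod_mem_gridCodeWeights (by simpa only [hA] using hy) (by rw [hsumA, hsum]; linarith)
  · rintro w ⟨f, hdeg, hf, rfl⟩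
    obtain ⟨y, hy, hsum, hprod⟩ := exists_prod_le_card_gridNonzeros A f hf
    simp only [hA] at hy
    refine (pow_mul_le_prod_of_le_sum univ (fun i _ ↦ hy i) ?_).trans hprod
    rw [card_fin]
    linarith

lemma isLeast_gridCodeWeights_one {A : Fin n → Finset R} {d : ℕ} (hA : ∀ i, (A i).Nonempty)
    (hd : ∑ i, #(A i) ≤ d + n) : IsLeast (gridCodeWeights A d) 1 := by
  constructor
  · simpa using prod_mem_gridCodeWeights (y := fun _ ↦ 1) (fun i ↦ ⟨le_rfl, (hA i).card_pos⟩)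
      (by simpa using hd)
  · rintro w ⟨f, -, hf, rfl⟩
    exact hf.card_pos

theorem stmt_17_general {A : Fin n → Finset R} {m : ℕ} (hm : 0 < m) (hA : ∀ i, #(A i) = m) :
    (∀ k l : ℕ, k < n → l ≤ m - 1 →
      IsLeast (gridCodeWeights A (k * (m - 1) + l)) (m ^ (n - k - 1) * (m - l))) ∧
    ∀ d : ℕ, n * (m - 1) ≤ d → IsLeast (gridCodeWeights A d) 1 := by
  refine ⟨fun k l ↦ isLeast_gridCodeWeights_of_card_eq hm hA, fun d hd ↦ ?_⟩
  refine isLeast_gridCodeWeights_one (fun i ↦ card_pos.1 (by rwa [hA i])) ?_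
  obtain ⟨s, rfl⟩ := Nat.exists_eq_add_of_le' hm
  simp only [hA, sum_const, card_fin, smul_eq_mul]
  rw [Nat.add_sub_cancel] at hd
  lia

end MinimumDistance

lemma gridCodeWeights_compl_zero {F : Type*} [Field F] [Fintype F] [DecidableEq F] (n d : ℕ) :
    gridCodeWeights (fun _ : Fin n ↦ ({0}ᶜ : Finset F)) d =
      {w : ℕ | ∃ f : MvPolynomial (Fin n) F, f.totalDegree ≤ d ∧
        (∃ x : Fin n → F, (∀ i, x i ≠ 0) ∧ eval x f ≠ 0) ∧
        w = #{x : Fin n → F | (∀ i, x i ≠ 0) ∧ eval x f ≠ 0}} := by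
  have hgrid (f : MvPolynomial (Fin n) F) : gridNonzeros (fun _ ↦ {0}ᶜ) f =
      ({x : Fin n → F | (∀ i, x i ≠ 0) ∧ eval x f ≠ 0} : Finset (Fin n → F)) := by
    ext x
    simp [mem_gridNonzeros]
  simp only [gridCodeWeights, hgrid, Finset.Nonempty, mem_filter, mem_univ, true_and]

theorem stmt_17 {F : Type*} [Field F] [Fintype F] [DecidableEq F]
    (q : ℕ) (hq : q = Fintype.card F) (hq3 : 3 ≤ q) (n : ℕ) (hn : 1 ≤ n) :
    (∀ d k ℓ : ℕ, 1 ≤ d → d ≤ n * (q - 2) - 1 →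
      d = k * (q - 2) + ℓ → 1 ≤ ℓ → ℓ ≤ q - 2 →
      IsLeast
        {w : ℕ | ∃ f : MvPolynomial (Fin n) F, f.totalDegree ≤ d ∧
          (∃ x : Fin n → F, (∀ i, x i ≠ 0) ∧ MvPolynomial.eval x f ≠ 0) ∧
          w = (Finset.univ.filter fun x : Fin n → F =>
            (∀ i, x i ≠ 0) ∧ MvPolynomial.eval x f ≠ 0).card}
        ((q - 1) ^ (n - k - 1) * (q - 1 - ℓ))) ∧
    (∀ d : ℕ, n * (q - 2) ≤ d →
      IsLeast
        {w : ℕ | ∃ f : MvPolynomial (Fin n) F, f.totalDegree ≤ d ∧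
          (∃ x : Fin n → F, (∀ i, x i ≠ 0) ∧ MvPolynomial.eval x f ≠ 0) ∧
          w = (Finset.univ.filter fun x : Fin n → F =>
            (∀ i, x i ≠ 0) ∧ MvPolynomial.eval x f ≠ 0).card}
        1) := by
  have hcard : ∀ _ : Fin n, #({0}ᶜ : Finset F) = q - 1 := fun _ ↦ by
    rw [card_compl, card_singleton, hq]
  obtain ⟨hdist, hone⟩ := stmt_17_general (by lia) hcard
  simp only [← gridCodeWeights_compl_zero]
  refine ⟨?_, hone⟩
  rintro d k ℓ hd hdn rfl - hℓ
  have hk : k < n := lt_of_mul_lt_mul_right (a := q - 2) (by lia) (Nat.zero_le _)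
  exact hdist k ℓ hk hℓ
end

section
/- Let K = F_q be a finite field, n ≥ 1, and X* = K^n = A^n. For 1 ≤ d ≤ n(q−1) − 1, write d = k(q−1) + ℓ with k ≥ 0 and 1 ≤ ℓ ≤ q−1. Then the minimum distance of the generalized Reed–Muller code C_{X*}(d) equals (q−ℓ) q^{n−k−1}; and for d ≥ n(q−1) the minimum distance is 1. -/
/-!
Let `∏ Sᵢ` be a finite grid over a domain. Dividing a polynomial by all the `∏ r ∈ Sᵢ, (Xᵢ - r)`
preserves its values on the grid, does not raise its total degree, and leaves only exponents
`sᵢ < #Sᵢ`. Splitting off one variable at a time, one finds in the support of such a remainder a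
monomial `s` such that at least `∏ (#Sᵢ - sᵢ)` points of the grid are not zeros. It remains to
minimise `∏ (#Sᵢ - sᵢ)` subject to `∑ sᵢ ≤ d`: if `#S₀ ≤ #S₁ ≤ ⋯`, the minimum is attained by
exhausting the first coordinates one after the other, and a product of linear forms `Xᵢ - r` with
these exponents attains the bound.
-/

section CartesianCode

open Finset MvPolynomial

section Optimization

@[to_additive]
lemma prod_Iio_mul_mul_prod_Ioi {ι M : Type*} [Fintype ι] [LinearOrder ι]
    [LocallyFiniteOrderBot ι] [LocallyFiniteOrderTop ι] [CommMonoid M] (f : ι → M) (k : ι) :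
    (∏ i ∈ Iio k, f i) * f k * ∏ i ∈ Ioi k, f i = ∏ i, f i := by
  have hcompl : (Iic k)ᶜ = Ioi k := by ext; simp
  rw [prod_Iio_mul_eq_prod_Iic, ← hcompl, prod_mul_prod_compl]

lemma mul_le_mul_of_add_le_add {a b x y : ℕ} (hax : a ≤ x) (hxb : x ≤ b) (h : a + b ≤ x + y) :
    a * b ≤ x * y := by
  obtain ⟨u, rfl⟩ := Nat.exists_eq_add_of_le hax
  obtain ⟨v, rfl⟩ := Nat.exists_eq_add_of_le hxb
  calc a * (a + u + v) ≤ (a + u) * (a + v) := by nlinarith [Nat.zero_le (u * v)]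
    _ ≤ (a + u) * y := Nat.mul_le_mul_left _ (by omega)

/- `hsum` says that `∑ y` is at least the sum of the extremal sequence `1, …, 1, c, d (k + 1), …`.
If `y 0 < c`, trading the entries `1, c` of this sequence for `y 0, c + 1 - y 0` does not decrease
its product; otherwise the same holds for trading `c, d (k + 1)` for `y 0, d (k + 1) + c - y 0`.
Then `y 0` cancels. -/
lemma mul_prod_Ioi_le_prod {n : ℕ} {d y : Fin n → ℕ} (hd : Monotone d) (hy : ∀ i, 1 ≤ y i)
    (hyd : ∀ i, y i ≤ d i) (k : Fin n) {c : ℕ} (hc : c ≤ d k)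
    (hsum : k + c + ∑ i ∈ Ioi k, d i ≤ ∑ i, y i) :
    c * ∏ i ∈ Ioi k, d i ≤ ∏ i, y i := by
  induction n generalizing c with
  | zero => exact k.elim0
  | succ n ih =>
    have ih_tail := ih (d := fun i => d i.succ) (y := fun i => y i.succ)
      (hd.comp Fin.strictMono_succ.monotone) (fun i => hy i.succ) (fun i => hyd i.succ)
    rw [Fin.sum_univ_succ] at hsum
    rw [Fin.prod_univ_succ]
    have prepend (j : Fin n) {a c' : ℕ} (ha : a ≤ y 0 * c') (hc' : c' ≤ d j.succ)
        (hsum' : j + c' + ∑ i ∈ Ioi j, d i.succ ≤ ∑ i : Fin n, y i.succ) :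
        a * ∏ i ∈ Ioi j, d i.succ ≤ y 0 * ∏ i : Fin n, y i.succ :=
      calc a * ∏ i ∈ Ioi j, d i.succ
          ≤ y 0 * (c' * ∏ i ∈ Ioi j, d i.succ) := by
            rw [← mul_assoc]
            exact Nat.mul_le_mul_right _ ha
        _ ≤ y 0 * ∏ i : Fin n, y i.succ := Nat.mul_le_mul_left _ (ih_tail j hc' hsum')
    by_cases hcy : c ≤ y 0
    · cases k using Fin.lastCases with
      | last =>
        have hIoi : Ioi (Fin.last n) = ∅ := by ext i; simp [Fin.le_last]
        rw [hIoi, prod_empty]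
        exact Nat.mul_le_mul hcy (one_le_prod' fun i _ => hy i.succ)
      | cast j =>
        have hIoi : Ioi j.castSucc = Ici j.succ := by ext i; simp [Fin.castSucc_lt_iff_succ_le]
        have hy0 : y 0 ≤ d j.succ := (hyd 0).trans (hd (Fin.zero_le _))
        rw [hIoi, ← add_sum_Ioi_eq_sum_Ici, Fin.sum_Ioi_succ, Fin.val_castSucc] at hsum
        rw [hIoi, ← mul_prod_Ioi_eq_prod_Ici, Fin.prod_Ioi_succ, ← mul_assoc]
        exact prepend j (c' := d j.succ + c - y 0)
          (mul_le_mul_of_add_le_add hcy hy0 (by omega)) (by omega) (by omega)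
    · have hk : k ≠ 0 := by
        rintro rfl
        have htail : ∑ i : Fin n, y i.succ ≤ ∑ i : Fin n, d i.succ :=
          sum_le_sum fun i _ => hyd i.succ
        rw [Fin.sum_Ioi_zero] at hsum
        omega
      obtain ⟨j, rfl⟩ := Fin.exists_succ_eq_of_ne_zero hk
      rw [Fin.sum_Ioi_succ, Fin.val_succ] at hsum
      rw [Fin.prod_Ioi_succ]
      have hy0 := hy 0
      have htrade : 1 * c ≤ y 0 * (c + 1 - y 0) :=
        mul_le_mul_of_add_le_add hy0 (not_le.1 hcy).le (by omega)
      exact prepend j ((one_mul c).ge.trans htrade) (by omega) (by omega)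

lemma sub_mul_prod_Ioi_le_prod_sub {n : ℕ} {d s : Fin n → ℕ} (hd : Monotone d)
    (hs : ∀ i, s i < d i) (k : Fin n) {ℓ : ℕ} (hℓ : ℓ < d k)
    (hsum : ∑ i, s i ≤ ∑ i ∈ Iio k, (d i - 1) + ℓ) :
    (d k - ℓ) * ∏ i ∈ Ioi k, d i ≤ ∏ i, (d i - s i) := by
  refine mul_prod_Ioi_le_prod hd (fun i => Nat.sub_pos_of_lt (hs i)) (fun i => Nat.sub_le _ _) k
    (Nat.sub_le _ _) ?_
  have hcompl : ∑ i, (d i - s i) + ∑ i, s i = ∑ i, d i := by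
    rw [← sum_add_distrib]
    exact sum_congr rfl fun i _ => Nat.sub_add_cancel (hs i).le
  have hIio : ∑ i ∈ Iio k, (d i - 1) + k = ∑ i ∈ Iio k, d i := by
    rw [← Fin.card_Iio k, card_eq_sum_ones, ← sum_add_distrib]
    exact sum_congr rfl fun i _ => Nat.sub_add_cancel ((Nat.zero_le _).trans_lt (hs i))
  have hsplit := sum_Iio_add_add_sum_Ioi d k
  omega

lemma exists_sum_eq_and_prod_sub_eq {ι : Type*} [Fintype ι] [LinearOrder ι]
    [LocallyFiniteOrderBot ι] [LocallyFiniteOrderTop ι] {d : ι → ℕ} (hd : ∀ i, 0 < d i) (k : ι)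
    {ℓ : ℕ} (hℓ : ℓ < d k) :
    ∃ s : ι → ℕ, (∀ i, s i < d i) ∧ ∑ i, s i = ∑ i ∈ Iio k, (d i - 1) + ℓ ∧
      ∏ i, (d i - s i) = (d k - ℓ) * ∏ i ∈ Ioi k, d i := by
  let s (i : ι) : ℕ := if i < k then d i - 1 else if i = k then ℓ else 0
  have hlt (i : ι) (hi : i ∈ Iio k) : s i = d i - 1 := if_pos (mem_Iio.1 hi)
  have heq : s k = ℓ := by simp [s]
  have hgt (i : ι) (hi : i ∈ Ioi k) : s i = 0 := by
    simp [s, (mem_Ioi.1 hi).ne', (mem_Ioi.1 hi).le]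
  refine ⟨s, fun i => ?_, ?_, ?_⟩
  · have := hd i
    grind
  · rw [← sum_Iio_add_add_sum_Ioi s k, sum_congr rfl hlt, heq, sum_eq_zero hgt, add_zero]
  · have hone (i : ι) (hi : i ∈ Iio k) : d i - s i = 1 := by
      rw [hlt i hi, Nat.sub_sub_self (hd i)]
    have hall (i : ι) (hi : i ∈ Ioi k) : d i - s i = d i := by rw [hgt i hi, Nat.sub_zero]
    rw [← prod_Iio_mul_mul_prod_Ioi _ k, prod_eq_one hone, heq, one_mul, prod_congr rfl hall]

end Optimization

section Grid

variable {R : Type*} [CommRing R]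

/-- The points of the grid `∏ i, S i` at which `f` does not vanish, i.e. the support of the
codeword of `f` in the affine cartesian code over this grid. -/
noncomputable def gridSupport {σ : Type*} [Fintype σ] [DecidableEq σ] [DecidableEq R]
    (S : σ → Finset R) (f : MvPolynomial σ R) : Finset (σ → R) :=
  {x ∈ Fintype.piFinset S | eval x f ≠ 0}

/-- The weights of the nonzero codewords of the affine cartesian code of degree `d` over the grid
`∏ i, S i`; its least element is the minimum distance of the code. -/
def cartesianCodeWeights {σ : Type*} [Fintype σ] [DecidableEq σ] [DecidableEq R]
    (S : σ → Finset R) (d : ℕ) : Set ℕ :=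
  {w | ∃ f : MvPolynomial σ R, f.totalDegree ≤ d ∧ (gridSupport S f).Nonempty ∧
    w = #(gridSupport S f)}

lemma exists_eval_eq_forall_mem_support_lt_card {σ : Type*} [Finite σ] [Nontrivial R]
    (S : σ → Finset R) (f : MvPolynomial σ R) :
    ∃ g : MvPolynomial σ R, g.totalDegree ≤ f.totalDegree ∧
      (∀ x : σ → R, (∀ i, x i ∈ S i) → eval x g = eval x f) ∧
      ∀ s ∈ g.support, ∀ i, s i < #(S i) := by
  let : LinearOrder σ := WellOrderingRel.isWellOrder.linearOrder
  let b (i : σ) : MvPolynomial σ R := ∏ r ∈ S i, (X i - C r)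
  have hmonic (i : σ) : MonomialOrder.degLex.Monic (b i) :=
    MonomialOrder.Monic.prod fun r _ => MonomialOrder.monic_X_sub_C _ i r
  have hdegree (i : σ) : MonomialOrder.degLex.degree (b i) = Finsupp.single i #(S i) := by
    have hregular (r : R) : IsRegular (MonomialOrder.degLex.leadingCoeff (X i - C r)) := by
      rw [MonomialOrder.monic_X_sub_C]
      exact isRegular_one
    rw [MonomialOrder.degree_prod_of_regular fun r _ => hregular r]
    simp [MonomialOrder.degree_X_sub_C]
  have hvanish (x : σ → R) (hx : ∀ i, x i ∈ S i) (i : σ) : eval x (b i) = 0 := by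
    rw [map_prod]
    exact prod_eq_zero (hx i) (by simp)
  obtain ⟨h, g, hf, hh, hg⟩ := MonomialOrder.degLex.div (b := b)
    (fun i => by rw [(hmonic i).leadingCoeff_eq_one]; exact isUnit_one) f
  rw [Finsupp.linearCombination_apply, Finsupp.sum] at hf
  refine ⟨g, ?_, fun x hx => ?_, fun s hs i => ?_⟩
  · rw [← sub_eq_iff_eq_add'.2 hf]
    refine (totalDegree_sub _ _).trans (max_le le_rfl (totalDegree_finsetSum_le fun i _ => ?_))
    rw [smul_eq_mul, mul_comm]
    exact degLex_totalDegree_monotone (hh i)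
  · rw [hf, map_add, map_sum, sum_eq_zero, zero_add]
    exact fun i _ => by rw [smul_eq_mul, map_mul, hvanish x hx, mul_zero]
  · simpa [hdegree] using hg s hs i

variable [IsDomain R] [DecidableEq R]

lemma card_sub_natDegree_le_card_filter_eval_ne_zero {p : Polynomial R} (hp : p ≠ 0)
    (T : Finset R) : #T - p.natDegree ≤ #{t ∈ T | p.eval t ≠ 0} := by
  have hroots : #{t ∈ T | p.eval t = 0} ≤ p.natDegree :=
    Polynomial.card_le_degree_of_subset_roots fun t ht =>
      (Polynomial.mem_roots hp).2 (mem_filter.1 ht).2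
  have hcard : #{t ∈ T | p.eval t = 0} + #{t ∈ T | p.eval t ≠ 0} = #T :=
    T.card_filter_add_card_filter_not _
  omega

lemma card_sub_natDegree_mul_card_gridSupport_leadingCoeff_le {n : ℕ}
    (S : Fin (n + 1) → Finset R) (g : MvPolynomial (Fin (n + 1)) R) :
    (#(S 0) - (finSuccEquiv R n g).natDegree) *
      #(gridSupport (Fin.tail S) (finSuccEquiv R n g).leadingCoeff) ≤ #(gridSupport S g) := by
  set P := finSuccEquiv R n g with hP
  set T := gridSupport (Fin.tail S) P.leadingCoeff
  have hfiber (y : Fin n → R) (hy : y ∈ T) :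
      #(S 0) - P.natDegree ≤ #{t ∈ S 0 | eval (Fin.cons t y : Fin (n + 1) → R) g ≠ 0} := by
    have hlead : (P.map (eval y)).leadingCoeff = eval y P.leadingCoeff :=
      Polynomial.leadingCoeff_map_of_leadingCoeff_ne_zero _ (mem_filter.1 hy).2
    have hmap : P.map (eval y) ≠ 0 :=
      Polynomial.leadingCoeff_ne_zero.1 (hlead ▸ (mem_filter.1 hy).2)
    simp only [eval_eq_eval_mv_eval', ← hP]
    exact (Nat.sub_le_sub_left Polynomial.natDegree_map_le _).trans
      (card_sub_natDegree_le_card_filter_eval_ne_zero hmap _)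
  calc (#(S 0) - P.natDegree) * #T
      ≤ ∑ y ∈ T, #{t ∈ S 0 | eval (Fin.cons t y : Fin (n + 1) → R) g ≠ 0} := by
        rw [mul_comm]
        exact card_nsmul_le_sum _ _ _ hfiber
    _ = #(T.sigma fun y => {t ∈ S 0 | eval (Fin.cons t y : Fin (n + 1) → R) g ≠ 0}) :=
        (card_sigma _ _).symm
    _ ≤ #(gridSupport S g) := by
        refine card_le_card_of_injOn
          (fun z : (_ : Fin n → R) × R => (Fin.cons z.2 z.1 : Fin (n + 1) → R)) (fun z hz => ?_) ?_
        · obtain ⟨hy, ht⟩ := mem_sigma.1 hz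
          rw [mem_filter] at ht
          exact mem_filter.2
            ⟨Fin.mem_piFinset_iff_zero_tail.2 ⟨ht.1, (mem_filter.1 hy).1⟩, ht.2⟩
        · rintro ⟨y, t⟩ - ⟨y', t'⟩ - h
          obtain ⟨rfl, rfl⟩ := Fin.cons_inj.1 h
          rfl

lemma exists_mem_support_prod_le_card_gridSupport {n : ℕ} (S : Fin n → Finset R)
    {g : MvPolynomial (Fin n) R} (hg : g ≠ 0) :
    ∃ s ∈ g.support, ∏ i, (#(S i) - s i) ≤ #(gridSupport S g) := by
  induction n with
  | zero =>
    obtain ⟨s, hs⟩ := support_nonempty.2 hg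
    refine ⟨s, hs, ?_⟩
    rw [Fin.prod_univ_zero, Nat.one_le_iff_ne_zero, card_ne_zero]
    refine ⟨Fin.elim0, mem_filter.2 ⟨Fintype.mem_piFinset.2 fun i => i.elim0, ?_⟩⟩
    rw [eq_C_of_isEmpty g, eval_C]
    exact fun h => hg (by rw [eq_C_of_isEmpty g, h, C_0])
  | succ n ih =>
    have hP : (finSuccEquiv R n g).leadingCoeff ≠ 0 := by simpa using hg
    obtain ⟨s, hs, hle⟩ := ih (Fin.tail S) hP
    refine ⟨s.cons (finSuccEquiv R n g).natDegree, mem_support_coeff_finSuccEquiv.1 hs, ?_⟩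
    simp only [Fin.prod_univ_succ, Finsupp.cons_zero, Finsupp.cons_succ]
    exact (Nat.mul_le_mul_left _ hle).trans
      (card_sub_natDegree_mul_card_gridSupport_leadingCoeff_le S g)

lemma exists_prod_card_sub_le_of_mem_cartesianCodeWeights {n : ℕ} {S : Fin n → Finset R} {d w : ℕ}
    (hw : w ∈ cartesianCodeWeights S d) :
    ∃ s : Fin n → ℕ, (∀ i, s i < #(S i)) ∧ ∑ i, s i ≤ d ∧ ∏ i, (#(S i) - s i) ≤ w := by
  obtain ⟨f, hfd, ⟨x, hx⟩, rfl⟩ := hw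
  obtain ⟨g, hgf, heval, hgS⟩ := exists_eval_eq_forall_mem_support_lt_card S f
  have hsupport : gridSupport S g = gridSupport S f :=
    filter_congr fun y hy => by rw [heval y (Fintype.mem_piFinset.1 hy)]
  have hg : g ≠ 0 := by
    rintro rfl
    rw [← hsupport] at hx
    simp [gridSupport] at hx
  obtain ⟨s, hs, hle⟩ := exists_mem_support_prod_le_card_gridSupport S hg
  refine ⟨s, hgS s hs, ?_, hle.trans_eq (congrArg card hsupport)⟩
  rw [← Finsupp.degree_eq_sum]
  exact (le_totalDegree hs).trans (hgf.trans hfd)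

lemma prod_card_sub_mem_cartesianCodeWeights {σ : Type*} [Fintype σ] [DecidableEq σ]
    {S : σ → Finset R} {s : σ → ℕ} (hs : ∀ i, s i < #(S i)) {d : ℕ} (hd : ∑ i, s i ≤ d) :
    ∏ i, (#(S i) - s i) ∈ cartesianCodeWeights S d := by
  choose T hTS hT using fun i => exists_subset_card_eq (hs i).le
  let f : MvPolynomial σ R := ∏ i, ∏ r ∈ T i, (X i - C r)
  have hsupport : gridSupport S f = Fintype.piFinset fun i => S i \ T i := by
    ext x
    simp only [gridSupport, f, mem_filter, Fintype.mem_piFinset, map_prod, map_sub, eval_X, eval_C,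
      prod_ne_zero_iff, mem_univ, true_imp_iff, sub_ne_zero, mem_sdiff, ← forall_and]
    exact forall_congr' fun i => and_congr_right fun _ => forall_mem_not_eq
  have hcard : #(gridSupport S f) = ∏ i, (#(S i) - s i) := by
    rw [hsupport, Fintype.card_piFinset]
    exact prod_congr rfl fun i _ => by rw [card_sdiff_of_subset (hTS i), hT]
  have hdegree : f.totalDegree ≤ ∑ i, s i := by
    refine (totalDegree_finsetProd _ _).trans (sum_le_sum fun i _ => ?_)
    refine (totalDegree_finsetProd _ _).trans ?_
    rw [← hT i, card_eq_sum_ones]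
    exact sum_le_sum fun r _ => (totalDegree_sub_C_le _ _).trans (totalDegree_X i).le
  refine ⟨f, hdegree.trans hd, ?_, hcard.symm⟩
  rw [← card_pos, hcard]
  exact prod_pos fun i _ => Nat.sub_pos_of_lt (hs i)

theorem stmt_18_general {n : ℕ} {S : Fin n → Finset R} (hS : ∀ i, (S i).Nonempty)
    (hmono : Monotone fun i => #(S i)) :
    (∀ (k : Fin n) (ℓ : ℕ), ℓ < #(S k) →
      IsLeast (cartesianCodeWeights S (∑ i ∈ Iio k, (#(S i) - 1) + ℓ))
        ((#(S k) - ℓ) * ∏ i ∈ Ioi k, #(S i))) ∧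
    ∀ d : ℕ, ∑ i, (#(S i) - 1) ≤ d → IsLeast (cartesianCodeWeights S d) 1 := by
  refine ⟨fun k ℓ hℓ => ⟨?_, fun w hw => ?_⟩, fun d hd => ⟨?_, ?_⟩⟩
  · obtain ⟨s, hs, hsum, hprod⟩ :=
      exists_sum_eq_and_prod_sub_eq (fun i => (hS i).card_pos) k hℓ
    exact hprod ▸ prod_card_sub_mem_cartesianCodeWeights hs hsum.le
  · obtain ⟨s, hs, hsum, hle⟩ := exists_prod_card_sub_le_of_mem_cartesianCodeWeights hw
    exact (sub_mul_prod_Ioi_le_prod_sub hmono hs k hℓ hsum).trans hle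
  · have hprod : ∏ i, (#(S i) - (#(S i) - 1)) = 1 :=
      prod_eq_one fun i _ => Nat.sub_sub_self (hS i).card_pos
    exact hprod ▸ prod_card_sub_mem_cartesianCodeWeights
      (fun i => Nat.sub_lt (hS i).card_pos one_pos) hd
  · rintro w ⟨f, -, hne, rfl⟩
    exact hne.card_pos

end Grid

lemma cartesianCodeWeights_univ {σ F : Type*} [Fintype σ] [DecidableEq σ] [CommRing F] [Fintype F]
    [DecidableEq F] (d : ℕ) :
    cartesianCodeWeights (fun _ : σ => (univ : Finset F)) d =
      {w | ∃ f : MvPolynomial σ F, f.totalDegree ≤ d ∧ (∃ x : σ → F, eval x f ≠ 0) ∧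
        w = #{x : σ → F | eval x f ≠ 0}} := by
  simp [cartesianCodeWeights, gridSupport, Finset.Nonempty]

end CartesianCode

theorem stmt_18 {F : Type*} [Field F] [Fintype F] [DecidableEq F]
    (q : ℕ) (hq : q = Fintype.card F) (n : ℕ) (hn : 1 ≤ n) :
    (∀ d k ℓ : ℕ, 1 ≤ d → d ≤ n * (q - 1) - 1 →
      d = k * (q - 1) + ℓ → 1 ≤ ℓ → ℓ ≤ q - 1 →
      IsLeast
        {w : ℕ | ∃ f : MvPolynomial (Fin n) F, f.totalDegree ≤ d ∧
          (∃ x : Fin n → F, MvPolynomial.eval x f ≠ 0) ∧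
          w = (Finset.univ.filter fun x : Fin n → F =>
            MvPolynomial.eval x f ≠ 0).card}
        ((q - ℓ) * q ^ (n - k - 1))) ∧
    (∀ d : ℕ, n * (q - 1) ≤ d →
      IsLeast
        {w : ℕ | ∃ f : MvPolynomial (Fin n) F, f.totalDegree ≤ d ∧
          (∃ x : Fin n → F, MvPolynomial.eval x f ≠ 0) ∧
          w = (Finset.univ.filter fun x : Fin n → F =>
            MvPolynomial.eval x f ≠ 0).card}
        1) := by
  subst hq
  obtain ⟨hmin, hone⟩ := stmt_18_general (S := fun _ : Fin n => (Finset.univ : Finset F))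
    (fun _ => Finset.univ_nonempty) monotone_const
  simp only [cartesianCodeWeights_univ, Finset.sum_const, Finset.prod_const, Finset.card_univ,
    Fin.card_Iio, Fin.card_Ioi, Fintype.card_fin, smul_eq_mul] at hmin hone
  refine ⟨fun d k ℓ _ hdn hd hℓ hℓq => ?_, hone⟩
  have hk : k < n := Nat.lt_of_mul_lt_mul_right (a := Fintype.card F - 1) (by omega)
  rw [hd, Nat.sub_right_comm]
  exact hmin ⟨k, hk⟩ ℓ (by omega)
end
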